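/- arXiv:2207.02713 — 2 statements merged into one kernel-verified Lean document; each statement's English description precedes it below -/
import Mathlib

section
/- Fix ν > 1/2 and λ with 0 < λ < a, where a = min{1/2, ν − 1/2}, and let h(x) = K_{ν+1}(x)/K_ν(x). There exists a unique B > 0 such that the function U(x) = (ν + 1/2 + λ + √(B + x²))/x satisfies h(x) ≤ U(x) for all x > 0 with equality for at least one x > 0; moreover the equality holds at exactly one point x* > 0, and at this point h′(x*) = U′(x*). Writing B = B(λ) and x* = x*(λ) for this fixed ν, both B(λ) and x*(λ) are decreasing on (0, a), and lim_{λ→0⁺} B(λ) = ν² − 1/4, lim_{λ→a⁻} B(λ) = (ν − 1)² if ν ≥ 1 and lim_{λ→a⁻} B(λ) = 0 if 1/2 < ν < 1, lim_{λ→0⁺} x*(λ) = +∞, lim_{λ→a⁻} x*(λ) = 0. -/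
open Set Filter

/-- The modified Bessel function of the second kind,
`K_ν(x) = ∫_0^∞ e^{-x cosh t} cosh(ν t) dt`. -/
noncomputable def besselK (ν x : ℝ) : ℝ :=
  ∫ t in Set.Ioi (0 : ℝ), Real.exp (-x * Real.cosh t) * Real.cosh (ν * t)

/-- The ratio `h(x) = K_{ν+1}(x)/K_ν(x)`. -/
noncomputable def ratioK (ν : ℝ) : ℝ → ℝ := fun x => besselK (ν + 1) x / besselK ν x

/-- The candidate upper bound `U(x) = (ν + 1/2 + λ + √(B + x²))/x`. -/
noncomputable def upK (ν lam B : ℝ) : ℝ → ℝ := fun x =>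
  (ν + 1 / 2 + lam + Real.sqrt (B + x ^ 2)) / x

/-- `B > 0`, `U` is an upper bound for `h` on `(0,∞)`, and the bound is attained somewhere. -/
def TouchesAboveK (ν lam B : ℝ) : Prop :=
  0 < B ∧ (∀ x > 0, ratioK ν x ≤ upK ν lam B x) ∧ ∃ x > 0, ratioK ν x = upK ν lam B x

/-- The touching point `x*` is unique and the graphs are tangent there. -/
def TangentAboveK (ν lam B xs : ℝ) : Prop :=
  0 < xs ∧ ratioK ν xs = upK ν lam B xs ∧
    (∀ x > 0, ratioK ν x = upK ν lam B x → x = xs) ∧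
    deriv (ratioK ν) xs = deriv (upK ν lam B) xs

/-!
Put `y = x h`. The recurrence and derivative formulas of `K_ν` give the Riccati equation
`x y' = T` with `T = y² - 2 ν y - x²`. For `w = y - (ν + 1/2 + λ)` the inequality `h ≤ U` means
`w ≤ √(B + x²)`, that is `g ≤ B` for `g = w² - x²`; so the best `B` is the maximum of `g`, and the
contact points are the maximum points. The Riccati equation becomes
`x g' = 2 q_g(w)`, `q_B(w) = 2 λ w² + (B - (ν² - (1/2 + λ)²)) w + B`.

Since `T > 0`, `w` increases. Two contact points would give two roots of the convex quadratic
`q_B`, and at the points in between `w` would lie strictly between these roots, so `g` would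
decrease between two equal maxima. A contact point exists because `g → -∞` at `∞` while near `0` the
values of `g` exceed their limit `(ν - 1/2 - λ)²`. Monotonicity in `λ` follows by comparing the
maxima of two functions `g` whose difference is positive and increasing in `x`. The limits in `λ`
are read off from `q_B(w) = 0` at the contact point, from which `x` is recovered as `√(w² - B)`.
-/

section

open Real MeasureTheory Asymptotics Topology

lemma exists_isMaxOn_Ioi {f : ℝ → ℝ} {a c : ℝ} (hf : ContinuousOn f (Ioi a)) (hc : a < c)
    (hleft : ∀ᶠ z in 𝓝[>] a, f z ≤ f c) (hright : ∀ᶠ z in atTop, f z ≤ f c) :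
    ∃ y ∈ Ioi a, IsMaxOn f (Ioi a) y := by
  obtain ⟨l, hal, hl⟩ := mem_nhdsGT_iff_exists_Ioo_subset.1 hleft
  obtain ⟨r, hr⟩ := eventually_atTop.1 hright
  have hsub : Icc (min l c) (max r c) ⊆ Ioi a := fun z hz => (lt_min hal hc).trans_le hz.1
  have hcmem : c ∈ Icc (min l c) (max r c) := ⟨min_le_right _ _, le_max_right _ _⟩
  obtain ⟨y, hy, hmax⟩ := isCompact_Icc.exists_isMaxOn ⟨c, hcmem⟩ (hf.mono hsub)
  have hcy : f c ≤ f y := hmax hcmem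
  refine ⟨y, hsub hy, fun z hz => ?_⟩
  rcases lt_or_ge z l with hzl | hlz
  · exact (hl ⟨hz, hzl⟩).trans hcy
  rcases le_or_gt r z with hrz | hzr
  · exact (hr z hrz).trans hcy
  · exact hmax ⟨(min_le_left _ _).trans hlz, hzr.le.trans (le_max_left _ _)⟩

lemma nonneg_of_deriv_pos_of_eq_zero {f f' : ℝ → ℝ} {a y : ℝ}
    (hf : ∀ z ≥ a, HasDerivAt f (f' z) z) (hpos : ∀ z ≥ a, f z = 0 → 0 < f' z)
    (ha : 0 ≤ f a) (hy : a ≤ y) : 0 ≤ f y :=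
  image_le_of_deriv_right_lt_deriv_boundary' (f := fun _ => 0) (f' := fun _ => 0)
    continuousOn_const (fun _ _ => hasDerivWithinAt_const _ _ _) ha
    (fun z hz => (hf z hz.1).continuousAt.continuousWithinAt)
    (fun z hz => (hf z hz.1).hasDerivWithinAt) (fun z hz h => hpos z hz.1 h.symm) ⟨hy, le_rfl⟩

lemma neg_of_lt_deriv_of_isLittleO_exp {f f' : ℝ → ℝ} {a : ℝ}
    (hf : ∀ z ≥ a, HasDerivAt f (f' z) z) (hgrow : ∀ z ≥ a, 0 ≤ f z → f z < f' z)
    (hexp : f =o[atTop] exp) : f a < 0 := by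
  by_contra! ha
  have hnonneg : ∀ z ≥ a, 0 ≤ f z := fun z hz =>
    nonneg_of_deriv_pos_of_eq_zero hf (fun w hw h₀ => h₀ ▸ hgrow w hw h₀.ge) ha hz
  have hderiv : ∀ z ≥ a, HasDerivAt (fun z => f z / exp z) ((f' z - f z) / exp z) z := fun z hz =>
    ((hf z hz).div (hasDerivAt_exp z) (exp_pos z).ne').congr_deriv (by field_simp)
  have hmono : StrictMonoOn (fun z => f z / exp z) (Ici a) := by
    refine strictMonoOn_of_hasDerivWithinAt_pos (convex_Ici a)
      (fun z hz => (hderiv z hz).continuousAt.continuousWithinAt)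
      (fun z hz => (hderiv z (interior_subset hz)).hasDerivWithinAt) fun z hz => ?_
    have hz' := interior_subset hz
    exact div_pos (sub_pos.2 (hgrow z hz' (hnonneg z hz'))) (exp_pos z)
  have hpos : 0 < f (a + 1) / exp (a + 1) :=
    (div_nonneg ha (exp_pos a).le).trans_lt (hmono self_mem_Ici (by simp) (lt_add_one a))
  refine hpos.not_ge (ge_of_tendsto hexp.tendsto_div_nhds_zero ?_)
  filter_upwards [eventually_ge_atTop (a + 1)] with z hz
  exact hmono.monotoneOn (by simp) ((le_add_of_nonneg_right zero_le_one).trans hz) hz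

lemma tendsto_atBot_nhdsGT_zero_of_le_mul_deriv {f f' : ℝ → ℝ} {c : ℝ} (hc : 0 < c)
    (hf : ∀ᶠ z in 𝓝[>] 0, HasDerivAt f (f' z) z ∧ c ≤ z * f' z) :
    Tendsto f (𝓝[>] 0) atBot := by
  obtain ⟨b, hb, hfb⟩ := mem_nhdsGT_iff_exists_Ioc_subset.1 hf
  have hderiv : ∀ z ∈ Ioc 0 b, HasDerivAt (fun z => f z - c * log z) (f' z - c * z⁻¹) z :=
    fun z hz => (hfb hz).1.sub ((hasDerivAt_log hz.1.ne').const_mul c)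
  have hmono : MonotoneOn (fun z => f z - c * log z) (Ioc 0 b) := by
    refine monotoneOn_of_hasDerivWithinAt_nonneg (convex_Ioc 0 b)
      (fun z hz => (hderiv z hz).continuousAt.continuousWithinAt)
      (fun z hz => (hderiv z (interior_subset hz)).hasDerivWithinAt) fun z hz => ?_
    have hz' := interior_subset hz
    rw [sub_nonneg, ← div_eq_mul_inv, div_le_iff₀' hz'.1]
    exact (hfb hz').2
  have hlog : Tendsto (fun z => f b - c * log b + c * log z) (𝓝[>] 0) atBot :=
    tendsto_atBot_add_const_left _ _ (tendsto_log_nhdsGT_zero.const_mul_atBot hc)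
  refine tendsto_atBot_mono' _ ?_ hlog
  filter_upwards [Ioc_mem_nhdsGT hb] with z hz
  have := hmono hz ⟨hb, le_rfl⟩ hz.2
  linarith

lemma cosh_le_exp_abs (t : ℝ) : cosh t ≤ exp |t| := by
  rw [← cosh_abs, ← cosh_add_sinh]
  exact le_add_of_nonneg_right (sinh_nonneg_iff.2 (abs_nonneg t))

lemma eventually_mul_le_mul_cosh {x : ℝ} (c : ℝ) (hx : 0 < x) :
    ∀ᶠ t in atTop, c * t ≤ x * cosh t := by
  have hlin : (fun t : ℝ => c * t) =o[atTop] exp :=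
    .const_mul_left (by simpa using isLittleO_pow_exp_atTop (n := 1)) c
  filter_upwards [hlin.def (half_pos hx)] with t ht
  have hcosh : exp t ≤ 2 * cosh t := by
    rw [cosh_eq]; linarith [exp_pos (-t)]
  calc c * t ≤ x / 2 * exp t := by simpa using (le_abs_self _).trans ht
    _ ≤ x / 2 * (2 * cosh t) := by gcongr
    _ = x * cosh t := by ring

/-! ### The modified Bessel function -/

/-- The integrand `e^{-x cosh t} cosh(ν t)` of `besselK ν x`. -/
noncomputable def besselKernel (ν x t : ℝ) : ℝ :=
  exp (-x * cosh t) * cosh (ν * t)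

variable {ν x : ℝ}

lemma besselKernel_pos (ν x t : ℝ) : 0 < besselKernel ν x t := by
  unfold besselKernel; positivity

lemma continuous_besselKernel (ν x : ℝ) : Continuous (besselKernel ν x) := by
  unfold besselKernel; fun_prop

lemma besselKernel_isBigO_exp_neg (ν : ℝ) (hx : 0 < x) :
    besselKernel ν x =O[atTop] fun t => exp (-t) := by
  refine IsBigO.of_bound 1 ?_
  filter_upwards [eventually_mul_le_mul_cosh (|ν| + 1) hx, eventually_ge_atTop 0] with t ht ht0
  rw [norm_of_nonneg (besselKernel_pos ν x t).le, norm_of_nonneg (exp_pos _).le, one_mul]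
  calc besselKernel ν x t ≤ exp (-x * cosh t) * exp (|ν| * t) := by
        unfold besselKernel
        gcongr
        simpa [abs_mul, abs_of_nonneg ht0] using cosh_le_exp_abs (ν * t)
    _ = exp (-x * cosh t + |ν| * t) := (exp_add _ _).symm
    _ ≤ exp (-t) := exp_le_exp.2 (by linarith)

lemma integrableOn_besselKernel (ν : ℝ) (hx : 0 < x) :
    IntegrableOn (besselKernel ν x) (Ioi 0) :=
  integrable_of_isBigO_exp_neg one_pos (continuous_besselKernel ν x).continuousOn
    (by simpa using besselKernel_isBigO_exp_neg ν hx)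

lemma besselK_pos (ν : ℝ) (hx : 0 < x) : 0 < besselK ν x := by
  refine (setIntegral_pos_iff_support_of_nonneg_ae
    (.of_forall fun t => (besselKernel_pos ν x t).le) (integrableOn_besselKernel ν hx)).2 ?_
  have hsupp : Function.support (besselKernel ν x) = univ :=
    Function.support_eq_univ fun t => (besselKernel_pos ν x t).ne'
  simp [hsupp]

lemma cosh_mul_besselKernel (ν x t : ℝ) :
    cosh t * besselKernel ν x t = (besselKernel (ν + 1) x t + besselKernel (ν - 1) x t) / 2 := by
  simp only [besselKernel, add_mul, sub_mul, one_mul, cosh_add, cosh_sub]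
  ring

lemma integrableOn_cosh_mul_besselKernel (ν : ℝ) (hx : 0 < x) :
    IntegrableOn (fun t => cosh t * besselKernel ν x t) (Ioi 0) := by
  simp only [cosh_mul_besselKernel]
  exact ((integrableOn_besselKernel _ hx).add (integrableOn_besselKernel _ hx)).div_const 2

lemma integral_cosh_mul_besselKernel (ν : ℝ) (hx : 0 < x) :
    ∫ t in Ioi 0, cosh t * besselKernel ν x t = (besselK (ν + 1) x + besselK (ν - 1) x) / 2 := by
  simp only [cosh_mul_besselKernel]
  rw [integral_div, integral_add (integrableOn_besselKernel _ hx) (integrableOn_besselKernel _ hx)]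
  rfl

lemma hasDerivAt_besselKernel (ν x t : ℝ) :
    HasDerivAt (fun y => besselKernel ν y t) (-(cosh t * besselKernel ν x t)) x := by
  have hexponent : HasDerivAt (fun y => -y * cosh t) (-1 * cosh t) x :=
    (hasDerivAt_id x).neg.mul_const _
  refine (hexponent.exp.mul_const (cosh (ν * t))).congr_deriv ?_
  unfold besselKernel
  ring

lemma hasDerivAt_besselK (ν : ℝ) (hx : 0 < x) :
    HasDerivAt (besselK ν) (-((besselK (ν + 1) x + besselK (ν - 1) x) / 2)) x := by
  rw [← integral_cosh_mul_besselKernel ν hx, ← integral_neg]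
  refine (hasDerivAt_integral_of_dominated_loc_of_deriv_le
    (bound := fun t => cosh t * besselKernel ν (x / 2) t)
    (Ioi_mem_nhds (half_lt_self hx))
    (.of_forall fun y => (continuous_besselKernel ν y).aestronglyMeasurable)
    (integrableOn_besselKernel ν hx)
    (continuous_cosh.mul (continuous_besselKernel ν x)).neg.aestronglyMeasurable
    (.of_forall fun t y hy => ?_)
    (integrableOn_cosh_mul_besselKernel ν (half_pos hx))
    (.of_forall fun t y _ => hasDerivAt_besselKernel ν y t)).2
  have hkernel : besselKernel ν y t ≤ besselKernel ν (x / 2) t := by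
    unfold besselKernel
    have := mem_Ioi.1 hy
    gcongr
  rw [norm_neg, norm_of_nonneg (mul_pos (cosh_pos t) (besselKernel_pos ν y t)).le]
  gcongr

lemma hasDerivAt_exp_mul_sinh (ν x t : ℝ) :
    HasDerivAt (fun t => exp (-x * cosh t) * sinh (ν * t))
      (ν * besselKernel ν x t - x / 2 * (besselKernel (ν + 1) x t - besselKernel (ν - 1) x t))
      t := by
  have hexp : HasDerivAt (fun t => exp (-x * cosh t)) (exp (-x * cosh t) * (-x * sinh t)) t :=
    ((hasDerivAt_cosh t).const_mul _).exp
  have hsinh : HasDerivAt (fun t => sinh (ν * t)) (cosh (ν * t) * (ν * 1)) t :=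
    ((hasDerivAt_id t).const_mul ν).sinh
  refine (hexp.mul hsinh).congr_deriv ?_
  simp only [besselKernel, add_mul, sub_mul, one_mul, cosh_add, cosh_sub]
  ring

lemma tendsto_exp_mul_sinh_atTop (ν : ℝ) (hx : 0 < x) :
    Tendsto (fun t => exp (-x * cosh t) * sinh (ν * t)) atTop (𝓝 0) := by
  refine squeeze_zero_norm (fun t => ?_)
    ((besselKernel_isBigO_exp_neg ν hx).trans_tendsto tendsto_exp_neg_atTop_nhds_zero)
  rw [norm_mul, norm_of_nonneg (exp_pos _).le, norm_eq_abs, abs_sinh]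
  unfold besselKernel
  gcongr
  exact (sinh_lt_cosh _).le.trans_eq (cosh_abs _)

lemma mul_besselK_add_one (ν : ℝ) (hx : 0 < x) :
    x * besselK (ν + 1) x = 2 * ν * besselK ν x + x * besselK (ν - 1) x := by
  have hint (μ : ℝ) := integrableOn_besselKernel μ hx
  have hdiff : IntegrableOn
      (fun t => x / 2 * (besselKernel (ν + 1) x t - besselKernel (ν - 1) x t)) (Ioi 0) :=
    ((hint _).sub (hint _)).const_mul _
  have hftc := integral_Ioi_of_hasDerivAt_of_tendsto'
    (fun t (_ : t ∈ Ici 0) => hasDerivAt_exp_mul_sinh ν x t)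
    (((hint ν).const_mul ν).sub hdiff) (tendsto_exp_mul_sinh_atTop ν hx)
  rw [integral_sub ((hint ν).const_mul ν) hdiff, integral_const_mul, integral_const_mul,
    integral_sub (hint _) (hint _)] at hftc
  simp only [mul_zero, sinh_zero, sub_zero] at hftc
  change ν * besselK ν x - x / 2 * (besselK (ν + 1) x - besselK (ν - 1) x) = 0 at hftc
  linarith

lemma two_mul_besselK_le (ν : ℝ) (hx : 0 < x) :
    2 * besselK ν x ≤ besselK (ν + 1) x + besselK (ν - 1) x := by
  have hle : besselK ν x ≤ ∫ t in Ioi 0, cosh t * besselKernel ν x t :=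
    integral_mono (integrableOn_besselKernel ν hx) (integrableOn_cosh_mul_besselKernel ν hx)
      fun t => le_mul_of_one_le_left (besselKernel_pos ν x t).le (one_le_cosh t)
  linarith [integral_cosh_mul_besselKernel ν hx]

/-! ### The Riccati equation -/

/-- The function `y(x) = x h(x)`, which satisfies the Riccati equation
`x y' = y² - 2 ν y - x²`. -/
noncomputable def scaledRatioK (ν x : ℝ) : ℝ :=
  x * ratioK ν x

/-- The Turánian `x² (K_{ν+1}(x) K_{ν-1}(x) / K_ν(x)² - 1)`, written in terms of
`y = scaledRatioK ν x`; it governs the sign of `y'`. -/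
noncomputable def turanK (ν x : ℝ) : ℝ :=
  scaledRatioK ν x ^ 2 - 2 * ν * scaledRatioK ν x - x ^ 2

lemma scaledRatioK_pos (ν : ℝ) (hx : 0 < x) : 0 < scaledRatioK ν x :=
  mul_pos hx (div_pos (besselK_pos _ hx) (besselK_pos _ hx))

lemma scaledRatioK_eq_two_mul_add (ν : ℝ) (hx : 0 < x) :
    scaledRatioK ν x = 2 * ν + x ^ 2 / scaledRatioK (ν - 1) x := by
  have hK := besselK_pos ν hx
  have := besselK_pos (ν - 1) hx
  have hrec := mul_besselK_add_one ν hx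
  simp only [scaledRatioK, ratioK, sub_add_cancel]
  field_simp
  linarith

lemma two_mul_lt_scaledRatioK (ν : ℝ) (hx : 0 < x) : 2 * ν < scaledRatioK ν x := by
  have := scaledRatioK_pos (ν - 1) hx
  rw [scaledRatioK_eq_two_mul_add ν hx]
  exact lt_add_of_pos_right _ (by positivity)

lemma add_le_scaledRatioK (ν : ℝ) (hx : 0 < x) : ν + x ≤ scaledRatioK ν x := by
  have hrec := mul_besselK_add_one ν hx
  have hconv := mul_le_mul_of_nonneg_left (two_mul_besselK_le ν hx) hx.le
  rw [scaledRatioK, ratioK, ← mul_div_assoc, le_div_iff₀ (besselK_pos ν hx)]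
  linarith

lemma scaledRatioK_isBigO_id (ν : ℝ) : scaledRatioK ν =O[atTop] fun x => x := by
  refine IsBigO.of_bound 3 ?_
  filter_upwards [eventually_ge_atTop (2 * (1 - ν)), eventually_ge_atTop (2 * ν),
    eventually_gt_atTop 0] with x hx1 hx2 hx0
  rw [norm_of_nonneg (scaledRatioK_pos ν hx0).le, norm_of_nonneg hx0.le,
    scaledRatioK_eq_two_mul_add ν hx0]
  have hhalf : x / 2 ≤ scaledRatioK (ν - 1) x := by linarith [add_le_scaledRatioK (ν - 1) hx0]
  calc 2 * ν + x ^ 2 / scaledRatioK (ν - 1) x ≤ x + x ^ 2 / (x / 2) := by gcongr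
    _ = 3 * x := by field_simp; norm_num

lemma differentiableAt_ratioK (ν : ℝ) (hx : 0 < x) : DifferentiableAt ℝ (ratioK ν) x :=
  (hasDerivAt_besselK (ν + 1) hx).differentiableAt.div
    (hasDerivAt_besselK ν hx).differentiableAt (besselK_pos ν hx).ne'

lemma hasDerivAt_scaledRatioK (ν : ℝ) (hx : 0 < x) :
    HasDerivAt (scaledRatioK ν) (turanK ν x / x) x := by
  have hK := besselK_pos ν hx
  have hderiv := (hasDerivAt_id x).mul
    ((hasDerivAt_besselK (ν + 1) hx).div (hasDerivAt_besselK ν hx) hK.ne')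
  have hup : besselK (ν + 1 + 1) x =
      (2 * (ν + 1) * besselK (ν + 1) x + x * besselK ν x) / x := by
    rw [eq_div_iff hx.ne', mul_comm, mul_besselK_add_one (ν + 1) hx, add_sub_cancel_right]
  have hdown : besselK (ν - 1) x = (x * besselK (ν + 1) x - 2 * ν * besselK ν x) / x := by
    rw [eq_div_iff hx.ne', mul_comm, mul_besselK_add_one ν hx, add_sub_cancel_left]
  refine hderiv.congr_deriv ?_
  simp only [Pi.div_apply, id, add_sub_cancel_right, hup, hdown, turanK, scaledRatioK, ratioK]
  field_simp
  ring

lemma continuousOn_scaledRatioK (ν : ℝ) : ContinuousOn (scaledRatioK ν) (Ioi 0) :=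
  fun _ hx => (hasDerivAt_scaledRatioK ν hx).continuousAt.continuousWithinAt

lemma hasDerivAt_turanK (ν : ℝ) (hx : 0 < x) :
    HasDerivAt (turanK ν) (2 * ((scaledRatioK ν x - ν) * turanK ν x - x ^ 2) / x) x := by
  have hy := hasDerivAt_scaledRatioK ν hx
  refine (((hy.pow 2).sub (hy.const_mul (2 * ν))).sub (hasDerivAt_pow 2 x)).congr_deriv ?_
  field_simp
  ring

lemma turanK_isBigO_sq (ν : ℝ) : turanK ν =O[atTop] fun x => x ^ 2 := by
  have hlin : (fun x : ℝ => x) =O[atTop] fun x => x ^ 2 := by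
    simpa using (isLittleO_pow_pow_atTop_of_lt (𝕜 := ℝ) one_lt_two).isBigO
  have hy := scaledRatioK_isBigO_id ν
  exact ((hy.pow 2).sub ((hy.trans hlin).const_mul_left (2 * ν))).sub (isBigO_refl _ _)

/-- Were `T = turanK ν` nonpositive somewhere, the equation `x T' = 2 ((y - ν) T - x²)` with
`x ≤ y - ν` would force `-T` to grow exponentially. -/
lemma turanK_pos (ν : ℝ) (hx : 0 < x) : 0 < turanK ν x := by
  refine neg_neg_iff_pos.1 (neg_of_lt_deriv_of_isLittleO_exp (f := fun z => -turanK ν z)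
    (fun z hz => (hasDerivAt_turanK ν (hx.trans_le hz)).neg) (fun z hz hneg => ?_)
    ((turanK_isBigO_sq ν).trans_isLittleO isLittleO_pow_exp_atTop).neg_left)
  have hz0 := hx.trans_le hz
  have hgrow := mul_le_mul_of_nonneg_right (add_le_scaledRatioK ν hz0) hneg
  rw [← neg_div, lt_div_iff₀ hz0]
  nlinarith [mul_nonneg hz0.le hneg, pow_pos hz0 2]

lemma strictMonoOn_scaledRatioK (ν : ℝ) : StrictMonoOn (scaledRatioK ν) (Ioi 0) := by
  refine strictMonoOn_of_hasDerivWithinAt_pos (convex_Ioi 0) (continuousOn_scaledRatioK ν)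
    (fun x hx => (hasDerivAt_scaledRatioK ν (interior_subset hx)).hasDerivWithinAt) fun x hx => ?_
  exact div_pos (turanK_pos ν (interior_subset hx)) (interior_subset hx)

/-- If `y` stayed above `κ`, then `x y'` would be bounded below by a positive constant near `0`, and
`y` would tend to `-∞`. -/
lemma exists_scaledRatioK_lt {κ : ℝ} (hκ : 0 < κ) (hκν : 2 * ν < κ) :
    ∃ b > 0, scaledRatioK ν b < κ := by
  by_contra! hge
  have hc : 0 < κ * (κ - 2 * ν) := mul_pos hκ (sub_pos.2 hκν)
  have hsq : ∀ᶠ x : ℝ in 𝓝[>] 0, x ^ 2 < κ * (κ - 2 * ν) / 2 :=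
    (tendsto_nhdsWithin_of_tendsto_nhds ((continuous_pow 2).tendsto' 0 0 (by simp))).eventually
      (gt_mem_nhds (half_pos hc))
  have hbot : Tendsto (scaledRatioK ν) (𝓝[>] 0) atBot := by
    refine tendsto_atBot_nhdsGT_zero_of_le_mul_deriv
      (f' := fun x => turanK ν x / x) (half_pos hc) ?_
    filter_upwards [self_mem_nhdsWithin, hsq] with x hx hx2
    refine ⟨hasDerivAt_scaledRatioK ν hx, ?_⟩
    have hprod : κ * (κ - 2 * ν) ≤ scaledRatioK ν x * (scaledRatioK ν x - 2 * ν) := by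
      have := hge x hx
      gcongr
      linarith
    rw [mul_div_cancel₀ _ (ne_of_gt hx), turanK]
    linarith
  obtain ⟨x, hneg, hx⟩ := ((hbot.eventually_lt_atBot 0).and self_mem_nhdsWithin).exists
  exact hneg.not_gt (scaledRatioK_pos ν hx)

lemma tendsto_scaledRatioK_nhdsGT_zero (ν : ℝ) :
    Tendsto (scaledRatioK ν) (𝓝[>] 0) (𝓝 (max (2 * ν) 0)) := by
  refine tendsto_order.2 ⟨fun c hc => ?_, fun κ hκ => ?_⟩
  · filter_upwards [self_mem_nhdsWithin] with x hx
    exact hc.trans (max_lt (two_mul_lt_scaledRatioK ν hx) (scaledRatioK_pos ν hx))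
  · obtain ⟨b, hb, hbκ⟩ := exists_scaledRatioK_lt (hκ.trans_le' (le_max_right _ _))
      (hκ.trans_le' (le_max_left _ _))
    filter_upwards [Ioo_mem_nhdsGT hb] with x hx
    exact (strictMonoOn_scaledRatioK ν hx.1 hb hx.2).trans hbκ

/-! ### Contact points -/

/-- The function `w(x) = x h(x) - (ν + 1/2 + λ)`, which `√(B + x²)` has to dominate. -/
noncomputable def excessK (ν lam x : ℝ) : ℝ :=
  scaledRatioK ν x - (ν + 1 / 2 + lam)

/-- The function `g(x) = w(x)² - x²`, the value of `B` for which the graph of `upK ν lam B` passes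
through `(x, h(x))`. -/
noncomputable def contactK (ν lam x : ℝ) : ℝ :=
  excessK ν lam x ^ 2 - x ^ 2

/-- The quadratic `q_B` with `x g'(x) = 2 q_{g(x)}(w(x))`. -/
noncomputable def contactQuad (ν lam B w : ℝ) : ℝ :=
  2 * lam * w ^ 2 + (B - (ν ^ 2 - (1 / 2 + lam) ^ 2)) * w + B

/-- A point where the graph of the best bound of parameter `lam` touches that of `ratioK ν`,
encoded as a global maximum of `contactK ν lam`. -/
def IsContactPoint (ν lam x : ℝ) : Prop :=
  0 < x ∧ IsMaxOn (contactK ν lam) (Ioi 0) x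

variable {lam B : ℝ}

lemma lt_excessK (ν lam : ℝ) (hx : 0 < x) : ν - 1 / 2 - lam < excessK ν lam x := by
  unfold excessK
  linarith [two_mul_lt_scaledRatioK ν hx]

lemma excessK_pos (hlam : lam < ν - 1 / 2) (hx : 0 < x) : 0 < excessK ν lam x :=
  (sub_pos.2 hlam).trans (lt_excessK ν lam hx)

lemma sub_le_excessK (ν lam : ℝ) (hx : 0 < x) : x - 1 / 2 - lam ≤ excessK ν lam x := by
  unfold excessK
  linarith [add_le_scaledRatioK ν hx]

lemma hasDerivAt_excessK (ν lam : ℝ) (hx : 0 < x) :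
    HasDerivAt (excessK ν lam) (turanK ν x / x) x :=
  (hasDerivAt_scaledRatioK ν hx).sub_const _

lemma strictMonoOn_excessK (ν lam : ℝ) : StrictMonoOn (excessK ν lam) (Ioi 0) :=
  fun _ hx _ hy hxy => sub_lt_sub_right (strictMonoOn_scaledRatioK ν hx hy hxy) _

lemma tendsto_excessK_atTop (ν lam : ℝ) : Tendsto (excessK ν lam) atTop atTop := by
  refine tendsto_atTop_mono' atTop ?_
    (tendsto_atTop_add_const_right _ (-(1 / 2) - lam) tendsto_id)
  filter_upwards [eventually_gt_atTop 0] with x hx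
  simp only [id]
  linarith [sub_le_excessK ν lam hx]

lemma contactQuad_contactK (ν lam x : ℝ) :
    contactQuad ν lam (contactK ν lam x) (excessK ν lam x) =
      excessK ν lam x * turanK ν x - x ^ 2 := by
  simp only [contactQuad, contactK, excessK, turanK]
  ring

lemma contactQuad_neg_of_mem_Ioo {w₁ w₂ w : ℝ} (hlam : 0 < lam)
    (h₁ : contactQuad ν lam B w₁ = 0) (h₂ : contactQuad ν lam B w₂ = 0) (hw : w ∈ Ioo w₁ w₂) :
    contactQuad ν lam B w < 0 := by
  obtain ⟨hw₁, hw₂⟩ := hw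
  have hchord : (w₂ - w₁) * contactQuad ν lam B w =
      (w₂ - w) * contactQuad ν lam B w₁ + (w - w₁) * contactQuad ν lam B w₂ -
        2 * lam * ((w - w₁) * (w₂ - w) * (w₂ - w₁)) := by
    unfold contactQuad
    ring
  have hprod : 0 < (w - w₁) * (w₂ - w) * (w₂ - w₁) :=
    mul_pos (mul_pos (sub_pos.2 hw₁) (sub_pos.2 hw₂)) (sub_pos.2 (hw₁.trans hw₂))
  refine neg_of_mul_neg_right ?_ (sub_pos.2 (hw₁.trans hw₂)).le
  rw [hchord, h₁, h₂]
  linarith [mul_pos hlam hprod]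

lemma hasDerivAt_contactK (ν lam : ℝ) (hx : 0 < x) :
    HasDerivAt (contactK ν lam)
      (2 * contactQuad ν lam (contactK ν lam x) (excessK ν lam x) / x) x := by
  refine (((hasDerivAt_excessK ν lam hx).pow 2).sub (hasDerivAt_pow 2 x)).congr_deriv ?_
  rw [contactQuad_contactK]
  field_simp
  ring

lemma continuousOn_contactK (ν lam : ℝ) : ContinuousOn (contactK ν lam) (Ioi 0) :=
  fun _ hx => (hasDerivAt_contactK ν lam hx).continuousAt.continuousWithinAt

lemma contactK_isBigO_sq (ν lam : ℝ) : contactK ν lam =O[atTop] fun x => x ^ 2 := by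
  have hexcess : excessK ν lam =O[atTop] fun x => x :=
    (scaledRatioK_isBigO_id ν).sub (isLittleO_const_id_atTop _).isBigO
  exact (hexcess.pow 2).sub (isBigO_refl _ _)

lemma contactK_eq_contactK_sub (ν l₁ l₂ x : ℝ) :
    contactK ν l₂ x = contactK ν l₁ x - (l₂ - l₁) * (excessK ν l₁ x + excessK ν l₂ x) := by
  simp only [contactK, excessK]
  ring

/-- With `P = ν² - 1/4`, the function `F = s (g - c)` satisfies
`x F' = 2 (w F + F + s ((c - P) w + c))`, so `F` grows exponentially from any point where it is
nonnegative. -/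
lemma eventually_mul_contactK_sub_neg {s c : ℝ} (hs : 0 < s * (c - (ν ^ 2 - 1 / 4))) :
    ∀ᶠ x in atTop, s * (contactK ν 0 x - c) < 0 := by
  have hlinear : ∀ᶠ z in atTop, 0 < s * (c - (ν ^ 2 - 1 / 4)) * excessK ν 0 z + s * c :=
    (tendsto_atTop_add_const_right _ _
      ((tendsto_excessK_atTop ν 0).const_mul_atTop hs)).eventually_gt_atTop 0
  obtain ⟨a, ha⟩ := eventually_atTop.1 (hlinear.and (eventually_ge_atTop 1))
  filter_upwards [eventually_ge_atTop a] with x hx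
  have hbound (z : ℝ) (hz : x ≤ z) := ha z (hx.trans hz)
  refine neg_of_lt_deriv_of_isLittleO_exp (f := fun z => s * (contactK ν 0 z - c))
    (fun z hz => ((hasDerivAt_contactK ν 0
      (one_pos.trans_le (hbound z hz).2)).sub_const c).const_mul s) (fun z hz hF => ?_) ?_
  · obtain ⟨hlin, hz1⟩ := hbound z hz
    have hz0 : 0 < z := one_pos.trans_le hz1
    have hhalf : z / 2 ≤ excessK ν 0 z := by linarith [sub_le_excessK ν 0 hz0]
    have hgrow := mul_le_mul_of_nonneg_right hhalf hF
    rw [mul_div_assoc', lt_div_iff₀ hz0, contactQuad]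
    linarith
  · have hconst : (fun _ : ℝ => c) =o[atTop] exp :=
      isLittleO_const_left.2 (.inr (tendsto_norm_atTop_atTop.comp tendsto_exp_atTop))
    exact (((contactK_isBigO_sq ν 0).trans_isLittleO isLittleO_pow_exp_atTop).sub
      hconst).const_mul_left s

lemma tendsto_contactK_zero_atTop (ν : ℝ) :
    Tendsto (contactK ν 0) atTop (𝓝 (ν ^ 2 - 1 / 4)) := by
  refine tendsto_order.2 ⟨fun c hc => ?_, fun c hc => ?_⟩
  · have hneg : 0 < -1 * (c - (ν ^ 2 - 1 / 4)) := by linarith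
    filter_upwards [eventually_mul_contactK_sub_neg hneg] with x hx
    linarith
  · have hpos : 0 < 1 * (c - (ν ^ 2 - 1 / 4)) := by linarith
    filter_upwards [eventually_mul_contactK_sub_neg hpos] with x hx
    linarith

lemma tendsto_contactK_atTop_atBot (ν : ℝ) (hlam : 0 < lam) :
    Tendsto (contactK ν lam) atTop atBot := by
  have hsum : Tendsto (fun x => lam * (excessK ν 0 x + excessK ν lam x)) atTop atTop :=
    ((tendsto_excessK_atTop ν 0).atTop_add_atTop (tendsto_excessK_atTop ν lam)).const_mul_atTop hlam
  refine ((tendsto_contactK_zero_atTop ν).add_atBot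
    (tendsto_neg_atTop_atBot.comp hsum)).congr fun x => ?_
  rw [contactK_eq_contactK_sub ν 0 lam x, sub_zero, Function.comp_apply, sub_eq_add_neg]

lemma tendsto_contactK_nhdsGT_zero (lam : ℝ) (hν : 0 ≤ ν) :
    Tendsto (contactK ν lam) (𝓝[>] 0) (𝓝 ((ν - 1 / 2 - lam) ^ 2)) := by
  have hsq : Tendsto (fun x : ℝ => x ^ 2) (𝓝[>] 0) (𝓝 0) :=
    tendsto_nhdsWithin_of_tendsto_nhds ((continuous_pow 2).tendsto' 0 0 (by simp))
  have hy := tendsto_scaledRatioK_nhdsGT_zero ν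
  rw [max_eq_left (by positivity)] at hy
  have hlimit : (ν - 1 / 2 - lam) ^ 2 = (2 * ν - (ν + 1 / 2 + lam)) ^ 2 - 0 := by ring
  exact hlimit ▸ ((hy.sub_const (ν + 1 / 2 + lam)).pow 2).sub hsq

/-- Here `w = b + x² / y_{ν-1}` with `b = ν - 1/2 - λ`, and `y_{ν-1} < 2 b` near `0`. -/
lemma eventually_sq_lt_contactK (hlam : lam < 1 / 2) (hlam' : lam < ν - 1 / 2) :
    ∀ᶠ x in 𝓝[>] 0, (ν - 1 / 2 - lam) ^ 2 < contactK ν lam x := by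
  have hlimit : max (2 * (ν - 1)) 0 < 2 * (ν - 1 / 2 - lam) := max_lt (by linarith) (by linarith)
  filter_upwards [self_mem_nhdsWithin,
    (tendsto_scaledRatioK_nhdsGT_zero (ν - 1)).eventually (gt_mem_nhds hlimit)] with x hx hlt
  have hy := scaledRatioK_pos (ν - 1) hx
  have hgain : x ^ 2 < x ^ 2 / scaledRatioK (ν - 1) x * (2 * (ν - 1 / 2 - lam)) := by
    rw [div_mul_eq_mul_div, lt_div_iff₀ hy]
    exact mul_lt_mul_of_pos_left hlt (pow_pos hx 2)
  rw [contactK, excessK, scaledRatioK_eq_two_mul_add ν hx]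
  nlinarith [sq_nonneg (x ^ 2 / scaledRatioK (ν - 1) x)]

lemma exists_isContactPoint (hlam : 0 < lam) (hlam₁ : lam < 1 / 2) (hlam₂ : lam < ν - 1 / 2) :
    ∃ x, IsContactPoint ν lam x := by
  obtain ⟨c, hgc, hc⟩ := ((eventually_sq_lt_contactK hlam₁ hlam₂).and self_mem_nhdsWithin).exists
  exact exists_isMaxOn_Ioi (continuousOn_contactK ν lam) hc
    (((tendsto_contactK_nhdsGT_zero lam (by linarith)).eventually (gt_mem_nhds hgc)).mono
      fun _ => le_of_lt)
    ((tendsto_contactK_atTop_atBot ν hlam).eventually_le_atBot _)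

lemma ratioK_le_upK_iff (hlam : lam < ν - 1 / 2) (hx : 0 < x) :
    ratioK ν x ≤ upK ν lam B x ↔ contactK ν lam x ≤ B := by
  have hle : ratioK ν x ≤ upK ν lam B x ↔ excessK ν lam x ≤ √(B + x ^ 2) := by
    rw [upK, le_div_iff₀' hx, excessK, scaledRatioK, sub_le_iff_le_add']
  rw [hle, le_sqrt' (excessK_pos hlam hx), contactK, sub_le_iff_le_add]

lemma ratioK_eq_upK_iff (hlam : lam < ν - 1 / 2) (hx : 0 < x) :
    ratioK ν x = upK ν lam B x ↔ contactK ν lam x = B := by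
  have heq : ratioK ν x = upK ν lam B x ↔ √(B + x ^ 2) = excessK ν lam x := by
    rw [upK, eq_div_iff hx.ne', excessK, scaledRatioK, mul_comm, eq_comm, eq_sub_iff_add_eq']
  rw [heq, sqrt_eq_iff_mul_self_eq_of_pos (excessK_pos hlam hx), contactK, sub_eq_iff_eq_add,
    sq (excessK ν lam x)]

lemma touchesAboveK_iff (hlam : lam < ν - 1 / 2) :
    TouchesAboveK ν lam B ↔ 0 < B ∧ ∃ x, IsContactPoint ν lam x ∧ contactK ν lam x = B := by
  refine and_congr_right fun _ => ⟨?_, ?_⟩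
  · rintro ⟨hle, x, hx, heq⟩
    obtain rfl := (ratioK_eq_upK_iff hlam hx).1 heq
    exact ⟨x, ⟨hx, fun z hz => (ratioK_le_upK_iff hlam hz).1 (hle z hz)⟩, rfl⟩
  · rintro ⟨x, ⟨hx, hmax⟩, rfl⟩
    exact ⟨fun z hz => (ratioK_le_upK_iff hlam hz).2 (hmax hz), x, hx,
      (ratioK_eq_upK_iff hlam hx).2 rfl⟩

namespace IsContactPoint

lemma of_contactK_eq {y : ℝ} (h : IsContactPoint ν lam x) (hy : 0 < y)
    (heq : contactK ν lam y = contactK ν lam x) : IsContactPoint ν lam y :=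
  ⟨hy, fun _ hz => (h.2 hz).trans_eq heq.symm⟩

lemma contactQuad_eq_zero (h : IsContactPoint ν lam x) :
    contactQuad ν lam (contactK ν lam x) (excessK ν lam x) = 0 := by
  have hcrit := (h.2.isLocalMax (Ioi_mem_nhds h.1)).hasDerivAt_eq_zero
    (hasDerivAt_contactK ν lam h.1)
  simpa [h.1.ne'] using hcrit

/-- Between two contact points `w` would lie strictly between two roots of `q_B`, so `g` would be
strictly decreasing. -/
lemma not_lt {y : ℝ} (hlam : 0 < lam) (hlam' : lam < ν - 1 / 2) (hx : IsContactPoint ν lam x)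
    (hy : IsContactPoint ν lam y) : ¬x < y := by
  intro hxy
  have hmax : contactK ν lam y = contactK ν lam x := (hx.2 hy.1).antisymm (hy.2 hx.1)
  have hroot : contactQuad ν lam (contactK ν lam x) (excessK ν lam y) = 0 :=
    hmax ▸ hy.contactQuad_eq_zero
  have hsub : Icc x y ⊆ Ioi 0 := fun z hz => hx.1.trans_le hz.1
  have hanti : StrictAntiOn (contactK ν lam) (Icc x y) := by
    refine strictAntiOn_of_hasDerivWithinAt_neg (convex_Icc x y)
      ((continuousOn_contactK ν lam).mono hsub)
      (fun z hz => (hasDerivAt_contactK ν lam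
        (hsub (interior_subset hz))).hasDerivWithinAt) fun z hz => ?_
    rw [interior_Icc] at hz
    have hz0 : 0 < z := hx.1.trans hz.1
    have hw := strictMonoOn_excessK ν lam
    have hneg := contactQuad_neg_of_mem_Ioo hlam hx.contactQuad_eq_zero hroot
      ⟨hw hx.1 hz0 hz.1, hw hz0 hy.1 hz.2⟩
    have hle : contactK ν lam z ≤ contactK ν lam x := hx.2 hz0
    have hw0 := excessK_pos hlam' hz0
    refine div_neg_of_neg_of_pos (mul_neg_of_pos_of_neg two_pos (hneg.trans_le' ?_)) hz0
    unfold contactQuad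
    gcongr
  exact (hanti (left_mem_Icc.2 hxy.le) (right_mem_Icc.2 hxy.le) hxy).ne hmax

lemma unique {y : ℝ} (hlam : 0 < lam) (hlam' : lam < ν - 1 / 2) (hx : IsContactPoint ν lam x)
    (hy : IsContactPoint ν lam y) : x = y :=
  le_antisymm (le_of_not_gt (hy.not_lt hlam hlam' hx)) (le_of_not_gt (hx.not_lt hlam hlam' hy))

lemma sq_lt_contactK (hlam : lam < 1 / 2) (hlam' : lam < ν - 1 / 2) (h : IsContactPoint ν lam x) :
    (ν - 1 / 2 - lam) ^ 2 < contactK ν lam x := by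
  obtain ⟨z, hlt, hz⟩ := ((eventually_sq_lt_contactK hlam hlam').and self_mem_nhdsWithin).exists
  exact hlt.trans_le (h.2 hz)

lemma contactK_pos (hlam : lam < 1 / 2) (hlam' : lam < ν - 1 / 2) (h : IsContactPoint ν lam x) :
    0 < contactK ν lam x :=
  (sq_nonneg _).trans_lt (h.sq_lt_contactK hlam hlam')

lemma touchesAboveK (hlam : lam < 1 / 2) (hlam' : lam < ν - 1 / 2) (h : IsContactPoint ν lam x) :
    TouchesAboveK ν lam (contactK ν lam x) :=
  (touchesAboveK_iff hlam').2 ⟨h.contactK_pos hlam hlam', x, h, rfl⟩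

lemma deriv_ratioK_eq_deriv_upK (hlam : lam < ν - 1 / 2) (h : IsContactPoint ν lam x) :
    deriv (ratioK ν) x = deriv (upK ν lam (contactK ν lam x)) x := by
  obtain ⟨hx, hmax⟩ := h
  have hradicand : contactK ν lam x + x ^ 2 ≠ 0 := by
    rw [contactK, sub_add_cancel]
    exact (pow_pos (excessK_pos hlam hx) 2).ne'
  have hup : DifferentiableAt ℝ (upK ν lam (contactK ν lam x)) x := by
    unfold upK
    fun_prop (disch := first | exact hradicand | exact hx.ne')
  have htouch := (ratioK_eq_upK_iff hlam hx).2 rfl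
  have hlocal : IsLocalMax (ratioK ν - upK ν lam (contactK ν lam x)) x := by
    filter_upwards [Ioi_mem_nhds hx] with z hz
    rw [Pi.sub_apply, Pi.sub_apply, htouch, sub_self, sub_nonpos]
    exact (ratioK_le_upK_iff hlam hz).2 (hmax hz)
  rw [← sub_eq_zero, ← deriv_sub (differentiableAt_ratioK ν hx) hup, hlocal.deriv_eq_zero]

lemma tangentAboveK (hlam : 0 < lam) (hlam' : lam < ν - 1 / 2) (h : IsContactPoint ν lam x) :
    TangentAboveK ν lam (contactK ν lam x) x := by
  refine ⟨h.1, (ratioK_eq_upK_iff hlam' h.1).2 rfl, fun z hz heq => ?_,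
    h.deriv_ratioK_eq_deriv_upK hlam'⟩
  exact (h.of_contactK_eq hz ((ratioK_eq_upK_iff hlam' hz).1 heq)).unique hlam hlam' h

end IsContactPoint

lemma existsUnique_touchesAboveK (hlam : 0 < lam) (hlam₁ : lam < 1 / 2) (hlam₂ : lam < ν - 1 / 2) :
    ∃! B, TouchesAboveK ν lam B := by
  obtain ⟨x, hx⟩ := exists_isContactPoint hlam hlam₁ hlam₂
  refine ⟨contactK ν lam x, hx.touchesAboveK hlam₁ hlam₂, fun B hB => ?_⟩
  obtain ⟨-, y, hy, rfl⟩ := (touchesAboveK_iff hlam₂).1 hB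
  exact (hx.2 hy.1).antisymm (hy.2 hx.1)

lemma TouchesAboveK.exists_tangentAboveK (hlam : 0 < lam) (hlam' : lam < ν - 1 / 2)
    (hB : TouchesAboveK ν lam B) : ∃ x, TangentAboveK ν lam B x := by
  obtain ⟨-, x, hx, rfl⟩ := (touchesAboveK_iff hlam').1 hB
  exact ⟨x, hx.tangentAboveK hlam hlam'⟩

section Monotonicity

variable {l₁ l₂ x₁ x₂ : ℝ}

lemma IsContactPoint.contactK_lt_contactK (hl : l₁ < l₂) (hl₂ : l₂ < ν - 1 / 2)
    (h₁ : IsContactPoint ν l₁ x₁) (h₂ : IsContactPoint ν l₂ x₂) :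
    contactK ν l₂ x₂ < contactK ν l₁ x₁ := by
  have hw₁ := excessK_pos (hl.trans hl₂) h₂.1
  have hw₂ := excessK_pos hl₂ h₂.1
  refine lt_of_lt_of_le ?_ (h₁.2 h₂.1)
  rw [contactK_eq_contactK_sub ν l₁ l₂]
  exact sub_lt_self _ (mul_pos (sub_pos.2 hl) (add_pos hw₁ hw₂))

/-- `g_{l₁} - g_{l₂} = (l₂ - l₁) (w_{l₁} + w_{l₂})` is increasing in `x`, so the maximum of
`g_{l₁}` cannot lie to the left of that of `g_{l₂}`; they do not coincide because
`w(x) T(x) = x²` at a contact point. -/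
lemma IsContactPoint.lt_of_param_lt (hl : l₁ < l₂) (h₁ : IsContactPoint ν l₁ x₁)
    (h₂ : IsContactPoint ν l₂ x₂) : x₂ < x₁ := by
  by_contra! hle
  rcases hle.lt_or_eq with hlt | rfl
  · have hw := mul_lt_mul_of_pos_left (add_lt_add (strictMonoOn_excessK ν l₁ h₁.1 h₂.1 hlt)
      (strictMonoOn_excessK ν l₂ h₁.1 h₂.1 hlt)) (sub_pos.2 hl)
    have hmax₁ : contactK ν l₁ x₂ ≤ contactK ν l₁ x₁ := h₁.2 h₂.1
    have hmax₂ : contactK ν l₂ x₁ ≤ contactK ν l₂ x₂ := h₂.2 h₁.1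
    linarith [contactK_eq_contactK_sub ν l₁ l₂ x₁, contactK_eq_contactK_sub ν l₁ l₂ x₂]
  · have hT₁ := (contactQuad_contactK ν l₁ x₁).symm.trans h₁.contactQuad_eq_zero
    have hT₂ := (contactQuad_contactK ν l₂ x₁).symm.trans h₂.contactQuad_eq_zero
    have hexcess : excessK ν l₂ x₁ < excessK ν l₁ x₁ := by
      unfold excessK
      linarith
    linarith [mul_lt_mul_of_pos_right hexcess (turanK_pos ν h₁.1)]

end Monotonicity

lemma sqrt_excessK_sq_sub_contactK (ν lam : ℝ) (hx : 0 ≤ x) :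
    √(excessK ν lam x ^ 2 - contactK ν lam x) = x := by
  rw [contactK, sub_sub_cancel, sqrt_sq hx]

namespace IsContactPoint

lemma lt_excessK_mul (hlam : 0 < lam) (hlam' : lam < ν - 1 / 2) (h : IsContactPoint ν lam x) :
    contactK ν lam x <
      excessK ν lam x * (ν ^ 2 - (1 / 2 + lam) ^ 2 - contactK ν lam x) := by
  have hroot := h.contactQuad_eq_zero
  rw [contactQuad] at hroot
  linarith [mul_pos hlam (pow_pos (excessK_pos hlam' h.1) 2)]

lemma contactK_lt (hlam : 0 < lam) (hlam₁ : lam < 1 / 2) (hlam₂ : lam < ν - 1 / 2)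
    (h : IsContactPoint ν lam x) : contactK ν lam x < ν ^ 2 - (1 / 2 + lam) ^ 2 :=
  sub_pos.1 <| pos_of_mul_pos_right
    ((h.contactK_pos hlam₁ hlam₂).trans (h.lt_excessK_mul hlam hlam₂)) (excessK_pos hlam₂ h.1).le

/-- With `b = ν - 1/2 - λ`, the quadratic `q_B(w)` is
`(w - b) (2 λ w - b) + (B - b²) (w + 1)`. -/
lemma excessK_lt (hlam : 0 < lam) (hlam₁ : lam < 1 / 2) (hlam₂ : lam < ν - 1 / 2)
    (h : IsContactPoint ν lam x) : excessK ν lam x < (ν - 1 / 2 - lam) / (2 * lam) := by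
  have hb := lt_excessK ν lam h.1
  have hB := h.sq_lt_contactK hlam₁ hlam₂
  have hw0 : 0 < excessK ν lam x := excessK_pos hlam₂ h.1
  set b := ν - 1 / 2 - lam with hbdef
  set w := excessK ν lam x
  have hfactor : (w - b) * (2 * lam * w - b) + (contactK ν lam x - b ^ 2) * (w + 1) = 0 := by
    rw [← h.contactQuad_eq_zero, contactQuad, hbdef]
    ring
  have hgap := mul_pos (sub_pos.2 hB) (add_pos hw0 one_pos)
  have hneg : 2 * lam * w - b < 0 := neg_of_mul_neg_right (by linarith) (sub_pos.2 hb).le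
  rw [lt_div_iff₀' (by positivity)]
  linarith

end IsContactPoint

/-! ### Limits in the parameter -/

section Limits

variable {X : ℝ → ℝ}

lemma tendsto_contactK_of_isContactPoint_nhdsGT_zero (hν : 1 / 2 < ν)
    (hX : ∀ᶠ lam in 𝓝[>] 0, IsContactPoint ν lam (X lam)) :
    Tendsto (fun lam => contactK ν lam (X lam)) (𝓝[>] 0) (𝓝 (ν ^ 2 - 1 / 4)) := by
  have hsmall : ∀ᶠ lam : ℝ in 𝓝[>] 0, lam ∈ Ioo 0 (min (1 / 2) (ν - 1 / 2)) :=
    Ioo_mem_nhdsGT (lt_min one_half_pos (sub_pos.2 hν))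
  refine tendsto_order.2 ⟨fun c hc => ?_, fun c hc => ?_⟩
  · obtain ⟨x, hcx, hx⟩ := (((tendsto_contactK_zero_atTop ν).eventually (lt_mem_nhds hc)).and
      (eventually_gt_atTop 0)).exists
    have hcont : Continuous fun lam => contactK ν lam x := by
      unfold contactK excessK
      fun_prop
    filter_upwards [hX, nhdsWithin_le_nhds (hcont.continuousAt.eventually (lt_mem_nhds hcx))]
      with lam hlam hlt
    exact hlt.trans_le (hlam.2 hx)
  · filter_upwards [hX, hsmall] with lam hlam ⟨h₀, ha⟩
    obtain ⟨h₁, h₂⟩ := lt_min_iff.1 ha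
    nlinarith [hlam.contactK_lt h₀ h₁ h₂]

lemma tendsto_excessK_of_isContactPoint_nhdsGT_zero (hν : 1 / 2 < ν)
    (hX : ∀ᶠ lam in 𝓝[>] 0, IsContactPoint ν lam (X lam)) :
    Tendsto (fun lam => excessK ν lam (X lam)) (𝓝[>] 0) atTop := by
  have hB := tendsto_contactK_of_isContactPoint_nhdsGT_zero hν hX
  have hsmall : ∀ᶠ lam : ℝ in 𝓝[>] 0, lam ∈ Ioo 0 (min (1 / 2) (ν - 1 / 2)) :=
    Ioo_mem_nhdsGT (lt_min one_half_pos (sub_pos.2 hν))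
  have hP : Tendsto (fun lam : ℝ => ν ^ 2 - (1 / 2 + lam) ^ 2) (𝓝[>] 0) (𝓝 (ν ^ 2 - 1 / 4)) :=
    tendsto_nhdsWithin_of_tendsto_nhds <| (by fun_prop : Continuous _).tendsto' _ _ (by norm_num)
  have hgap : Tendsto (fun lam => ν ^ 2 - (1 / 2 + lam) ^ 2 - contactK ν lam (X lam))
      (𝓝[>] 0) (𝓝[>] 0) := by
    refine tendsto_nhdsWithin_iff.2 ⟨by simpa using hP.sub hB, ?_⟩
    filter_upwards [hX, hsmall] with lam hlam ⟨h₀, ha⟩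
    obtain ⟨h₁, h₂⟩ := lt_min_iff.1 ha
    exact sub_pos.2 (hlam.contactK_lt h₀ h₁ h₂)
  refine tendsto_atTop_mono' _ ?_ (hB.pos_mul_atTop (by nlinarith) hgap.inv_tendsto_nhdsGT_zero)
  filter_upwards [hX, hsmall] with lam hlam ⟨h₀, ha⟩
  obtain ⟨h₁, h₂⟩ := lt_min_iff.1 ha
  rw [Pi.inv_apply, ← div_eq_mul_inv, div_le_iff₀ (sub_pos.2 (hlam.contactK_lt h₀ h₁ h₂))]
  exact (hlam.lt_excessK_mul h₀ h₂).le

lemma tendsto_isContactPoint_nhdsGT_zero (hν : 1 / 2 < ν)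
    (hX : ∀ᶠ lam in 𝓝[>] 0, IsContactPoint ν lam (X lam)) :
    Tendsto X (𝓝[>] 0) atTop := by
  have hw := tendsto_excessK_of_isContactPoint_nhdsGT_zero hν hX
  have hB := tendsto_contactK_of_isContactPoint_nhdsGT_zero hν hX
  have hsq := ((tendsto_pow_atTop two_ne_zero).comp hw).atTop_add hB.neg
  refine (tendsto_sqrt_atTop.comp hsq).congr' ?_
  filter_upwards [hX] with lam hlam
  simpa [sub_eq_add_neg] using sqrt_excessK_sq_sub_contactK ν lam hlam.1.le

variable {a : ℝ}

lemma tendsto_excessK_of_isContactPoint_nhdsLT (hν : 1 / 2 < ν) (ha : a = min (1 / 2) (ν - 1 / 2))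
    (hX : ∀ᶠ lam in 𝓝[<] a, IsContactPoint ν lam (X lam)) :
    Tendsto (fun lam => excessK ν lam (X lam)) (𝓝[<] a) (𝓝 (ν - 1 / 2 - a)) := by
  have ha0 : 0 < a := ha ▸ lt_min one_half_pos (sub_pos.2 hν)
  have hfixed : (ν - 1 / 2 - a) / (2 * a) = ν - 1 / 2 - a := by
    rcases min_choice (1 / 2) (ν - 1 / 2) with h | h <;> rw [ha, h] <;> norm_num
  have hlower : Tendsto (fun lam => ν - 1 / 2 - lam) (𝓝[<] a) (𝓝 (ν - 1 / 2 - a)) :=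
    (tendsto_nhdsWithin_of_tendsto_nhds tendsto_id).const_sub _
  have hupper : Tendsto (fun lam => (ν - 1 / 2 - lam) / (2 * lam)) (𝓝[<] a)
      (𝓝 (ν - 1 / 2 - a)) := by
    have hden : Tendsto (fun lam => 2 * lam) (𝓝[<] a) (𝓝 (2 * a)) :=
      (tendsto_nhdsWithin_of_tendsto_nhds tendsto_id).const_mul 2
    exact hfixed ▸ hlower.div hden (by positivity)
  refine tendsto_of_tendsto_of_tendsto_of_le_of_le' hlower hupper ?_ ?_
  · filter_upwards [hX] with lam hlam
    exact (lt_excessK ν lam hlam.1).le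
  · filter_upwards [hX, Ioo_mem_nhdsLT ha0] with lam hlam ⟨h₀, hlt⟩
    obtain ⟨h₁, h₂⟩ := lt_min_iff.1 (ha ▸ hlt)
    exact (hlam.excessK_lt h₀ h₁ h₂).le

lemma tendsto_contactK_of_isContactPoint_nhdsLT (hν : 1 / 2 < ν)
    (ha : a = min (1 / 2) (ν - 1 / 2)) (hX : ∀ᶠ lam in 𝓝[<] a, IsContactPoint ν lam (X lam)) :
    Tendsto (fun lam => contactK ν lam (X lam)) (𝓝[<] a) (𝓝 ((ν - 1 / 2 - a) ^ 2)) := by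
  have hlower : Tendsto (fun lam => (ν - 1 / 2 - lam) ^ 2) (𝓝[<] a) (𝓝 ((ν - 1 / 2 - a) ^ 2)) :=
    ((tendsto_nhdsWithin_of_tendsto_nhds tendsto_id).const_sub _).pow 2
  refine tendsto_of_tendsto_of_tendsto_of_le_of_le' hlower
    ((tendsto_excessK_of_isContactPoint_nhdsLT hν ha hX).pow 2) ?_ ?_
  · filter_upwards [hX, self_mem_nhdsWithin] with lam hlam hlt
    obtain ⟨h₁, h₂⟩ := lt_min_iff.1 (ha ▸ mem_Iio.1 hlt)
    exact (hlam.sq_lt_contactK h₁ h₂).le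
  · filter_upwards with lam
    exact sub_le_self _ (sq_nonneg _)

lemma tendsto_isContactPoint_nhdsLT (hν : 1 / 2 < ν) (ha : a = min (1 / 2) (ν - 1 / 2))
    (hX : ∀ᶠ lam in 𝓝[<] a, IsContactPoint ν lam (X lam)) :
    Tendsto X (𝓝[<] a) (𝓝 0) := by
  have hsq := ((tendsto_excessK_of_isContactPoint_nhdsLT hν ha hX).pow 2).sub
    (tendsto_contactK_of_isContactPoint_nhdsLT hν ha hX)
  rw [sub_self] at hsq
  refine (sqrt_zero ▸ hsq.sqrt).congr' ?_
  filter_upwards [hX] with lam hlam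
  exact sqrt_excessK_sq_sub_contactK ν lam hlam.1.le

end Limits

lemma sub_half_sub_min_sq (ν : ℝ) :
    (ν - 1 / 2 - min (1 / 2) (ν - 1 / 2)) ^ 2 = if 1 ≤ ν then (ν - 1) ^ 2 else 0 := by
  split_ifs with h
  · rw [min_eq_left (by linarith)]
    ring
  · rw [min_eq_right (by linarith)]
    ring

end

theorem best_upper_bound_K (ν a : ℝ) (hν : 1 / 2 < ν) (ha : a = min (1 / 2) (ν - 1 / 2)) :
    (∀ lam ∈ Ioo (0 : ℝ) a,
      (∃! B : ℝ, TouchesAboveK ν lam B) ∧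
      (∀ B : ℝ, TouchesAboveK ν lam B → ∃ xs : ℝ, TangentAboveK ν lam B xs)) ∧
    (∃ B X : ℝ → ℝ,
      (∀ lam ∈ Ioo (0 : ℝ) a,
        TouchesAboveK ν lam (B lam) ∧ TangentAboveK ν lam (B lam) (X lam)) ∧
      StrictAntiOn B (Ioo (0 : ℝ) a) ∧
      StrictAntiOn X (Ioo (0 : ℝ) a) ∧
      Tendsto B (nhdsWithin 0 (Ioi 0)) (nhds (ν ^ 2 - 1 / 4)) ∧
      Tendsto B (nhdsWithin a (Iio a)) (nhds (if 1 ≤ ν then (ν - 1) ^ 2 else 0)) ∧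
      Tendsto X (nhdsWithin 0 (Ioi 0)) atTop ∧
      Tendsto X (nhdsWithin a (Iio a)) (nhds 0)) := by
  have ha₀ : 0 < a := ha ▸ lt_min one_half_pos (sub_pos.2 hν)
  have hlt : ∀ lam ∈ Ioo 0 a, lam < 1 / 2 ∧ lam < ν - 1 / 2 := fun lam hlam =>
    lt_min_iff.1 (ha ▸ hlam.2)
  have hexists : ∀ lam ∈ Ioo 0 a, ∃ x, IsContactPoint ν lam x := fun lam hlam =>
    exists_isContactPoint hlam.1 (hlt lam hlam).1 (hlt lam hlam).2
  choose! X hX using hexists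
  have hX₀ := eventually_of_mem (Ioo_mem_nhdsGT ha₀) hX
  have hXa := eventually_of_mem (Ioo_mem_nhdsLT ha₀) hX
  refine ⟨fun lam hlam => ?_, fun lam => contactK ν lam (X lam), X, fun lam hlam => ?_,
    fun l₁ h₁ l₂ h₂ hl => (hX l₁ h₁).contactK_lt_contactK hl (hlt l₂ h₂).2 (hX l₂ h₂),
    fun l₁ h₁ l₂ h₂ hl => (hX l₁ h₁).lt_of_param_lt hl (hX l₂ h₂),
    tendsto_contactK_of_isContactPoint_nhdsGT_zero hν hX₀, ?_,
    tendsto_isContactPoint_nhdsGT_zero hν hX₀, tendsto_isContactPoint_nhdsLT hν ha hXa⟩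
  · obtain ⟨h₁, h₂⟩ := hlt lam hlam
    exact ⟨existsUnique_touchesAboveK hlam.1 h₁ h₂, fun B hB => hB.exists_tangentAboveK hlam.1 h₂⟩
  · obtain ⟨h₁, h₂⟩ := hlt lam hlam
    exact ⟨(hX lam hlam).touchesAboveK h₁ h₂, (hX lam hlam).tangentAboveK hlam.1 h₂⟩
  · rw [← sub_half_sub_min_sq, ← ha]
    exact tendsto_contactK_of_isContactPoint_nhdsLT hν ha hXa
end

section
/- Fix ν ≥ 0 and λ ∈ (1/2, 2), and let h(x) = I_{ν−1}(x)/I_ν(x). There exists a unique C > 0 such that the function U(x) = (ν − λ + √((ν + λ)² + C·x²))/x satisfies h(x) ≤ U(x) for all x > 0 with equality for at least one x > 0; moreover the equality holds at exactly one point x* > 0, and at this point h′(x*) = U′(x*). Writing C = C(λ) and x* = x*(λ) for this fixed ν, the function C(λ) is increasing and x*(λ) is decreasing on (1/2, 2), and lim_{λ→1/2⁺} C(λ) = 1, lim_{λ→2⁻} C(λ) = (ν + 2)/(ν + 1), lim_{λ→1/2⁺} x*(λ) = +∞, lim_{λ→2⁻} x*(λ) = 0. -/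
open Set Filter

/-- The modified Bessel function of the first kind,
`I_ν(x) = ∑_{k=0}^∞ (x/2)^{2k+ν} / (k! Γ(k+ν+1))`
(here `1/Γ` vanishes at nonpositive integer arguments, since `Real.Gamma` is `0` there). -/
noncomputable def besselI (ν x : ℝ) : ℝ :=
  ∑' k : ℕ, (x / 2) ^ (2 * (k : ℝ) + ν) / ((Nat.factorial k : ℝ) * Real.Gamma ((k : ℝ) + ν + 1))

/-- The ratio `h(x) = I_{ν-1}(x)/I_ν(x)`. -/
noncomputable def ratioI (ν : ℝ) : ℝ → ℝ := fun x => besselI (ν - 1) x / besselI ν x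

/-- The candidate upper bound `U(x) = (ν - λ + √((ν + λ)² + C x²))/x`. -/
noncomputable def upI (ν lam C : ℝ) : ℝ → ℝ := fun x =>
  (ν - lam + Real.sqrt ((ν + lam) ^ 2 + C * x ^ 2)) / x

/-- `C > 0`, `U` is an upper bound for `h` on `(0,∞)`, and the bound is attained somewhere. -/
def TouchesAboveI (ν lam C : ℝ) : Prop :=
  0 < C ∧ (∀ x > 0, ratioI ν x ≤ upI ν lam C x) ∧ ∃ x > 0, ratioI ν x = upI ν lam C x

/-- The touching point `x*` is unique and the graphs are tangent there. -/
def TangentAboveI (ν lam C xs : ℝ) : Prop :=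
  0 < xs ∧ ratioI ν xs = upI ν lam C xs ∧
    (∀ x > 0, ratioI ν x = upI ν lam C x → x = xs) ∧
    deriv (ratioI ν) xs = deriv (upI ν lam C) xs

/-! Write `I_μ(x) = (x / 2) ^ μ φ_μ(x ^ 2)` and, as functions of `t = x ^ 2`, let
`a = φ_{ν+1} / (2 φ_ν)`, let `b` be the same quotient for `ν + 1`, and let `d = a - b`. Squaring
shows that `h(x) ≤ U(x)` if and only if `F_λ(t) ≤ C`, where `F_λ = t a ^ 2 + 2 (ν + λ) a`, and
likewise for equality. Hence `C(λ)` is the maximum of `F_λ` over `t > 0`, and `x*(λ)` is the square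
root of its maximiser. The Bessel recurrence gives `F_λ' = a d (2 - λ - q)` with
`q = ν + 2 + t a - a / d`, so it remains to see that `q` increases from `0` to `3 / 2`.

Put `z = t d`. Then `z' = d (1 + z / 2 - q)` and `t d q' = a (2 z - z ^ 2 / 2 - q)`. Where `z = 1`,
one has `q = ν + 2 > 3 / 2` and so `z' < 0`; therefore `z < 1` everywhere. Where
`q = 2 z - z ^ 2 / 2`, the derivative of `2 z - z ^ 2 / 2 - q` is `d (1 - z) (2 - z) ^ 2 / 2 > 0`;
therefore `q < 2 z - z ^ 2 / 2 < 3 / 2` for `t > 0`, and `q` increases. Finally `z → 1` as `t → ∞`,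
so `t z' = z (1 + z / 2 - q)` cannot stay away from `0`, which forces `q → 3 / 2`. -/

open scoped Topology

section Calculus

lemma pos_of_deriv_pos_of_eq_zero {f f' : ℝ → ℝ} {a : ℝ}
    (hf : ∀ x, a ≤ x → HasDerivAt f (f' x) x) (ha : 0 ≤ f a)
    (hzero : ∀ x, a ≤ x → f x = 0 → 0 < f' x) {x : ℝ} (hx : a < x) : 0 < f x := by
  have nonneg : ∀ y, a ≤ y → 0 ≤ f y := fun y hy ↦
    image_le_of_deriv_right_lt_deriv_boundary' (f := fun _ ↦ 0) (f' := fun _ ↦ 0) (b := y)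
      continuousOn_const (fun _ _ ↦ hasDerivWithinAt_const _ _ _) ha
      (fun z hz ↦ (hf z hz.1).continuousAt.continuousWithinAt)
      (fun z hz ↦ (hf z hz.1).hasDerivWithinAt) (fun z hz h ↦ hzero z hz.1 h.symm)
      (right_mem_Icc.2 hy)
  refine (nonneg x hx.le).lt_of_ne' fun h0 ↦ ?_
  have hmin : IsLocalMin f x := by
    filter_upwards [eventually_gt_nhds hx] with y hy
    exact h0 ▸ nonneg y hy.le
  exact (hzero x hx.le h0).ne' (hmin.hasDerivAt_eq_zero (hf x hx.le))

lemma nonpos_of_tendsto_of_le_mul_deriv {f f' : ℝ → ℝ} {l m : ℝ} (hl : Tendsto f atTop (𝓝 l))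
    (hf : ∀ᶠ x in atTop, HasDerivAt f (f' x) x) (hm : ∀ᶠ x in atTop, m ≤ x * f' x) :
    m ≤ 0 := by
  by_contra! hpos
  have hdiff : Tendsto (fun x ↦ f (2 * x) - f x) atTop (𝓝 0) := by
    simpa using (hl.comp (tendsto_id.const_mul_atTop two_pos)).sub hl
  have hgain : ∀ᶠ x in atTop, m / 2 ≤ f (2 * x) - f x := by
    filter_upwards [eventually_gt_atTop 0, eventually_forall_ge_atTop.2 hf,
      eventually_forall_ge_atTop.2 hm] with x hx hfx hmx
    obtain ⟨y, hy, hslope⟩ := exists_hasDerivAt_eq_slope f f' (by linarith : x < 2 * x)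
      (fun y hy ↦ (hfx y hy.1).continuousAt.continuousWithinAt)
      (fun y hy ↦ hfx y hy.1.le)
    have hgain : f (2 * x) - f x = x * f' y := by rw [hslope]; field_simp; ring
    have hpos' : 0 < f' y := pos_of_mul_pos_right (hpos.trans_le (hmx y hy.1.le))
      (hx.trans hy.1).le
    nlinarith [hmx y hy.1.le, hy.2]
  exact absurd (ge_of_tendsto hdiff hgain) (by linarith)

lemma deriv_eq_of_eventually_le_of_eq {f g : ℝ → ℝ} {x : ℝ} (hf : DifferentiableAt ℝ f x)
    (hg : DifferentiableAt ℝ g x) (hle : f ≤ᶠ[𝓝 x] g) (heq : f x = g x) :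
    deriv f x = deriv g x := by
  have hmin : IsLocalMin (g - f) x := by
    filter_upwards [hle] with y hy
    simpa [heq] using hy
  have := hmin.deriv_eq_zero
  rw [deriv_sub hg hf] at this
  linarith

lemma summable_succ_mul_mul_pow {c : ℕ → ℝ} (hc : ∀ r, Summable fun k ↦ c k * r ^ k) (r : ℝ) :
    Summable fun k : ℕ ↦ (k + 1) * c (k + 1) * r ^ k := by
  refine .of_norm_bounded ((summable_nat_add_iff 1).2 (hc (2 * (|r| + 1))).norm) fun k ↦ ?_
  have hk : (k + 1 : ℝ) ≤ 2 ^ (k + 1) := mod_cast Nat.lt_two_pow_self.le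
  have hr : |r| ^ k ≤ (|r| + 1) ^ (k + 1) :=
    (pow_le_pow_left₀ (abs_nonneg r) (by linarith) k).trans
      (pow_le_pow_right₀ (by linarith [abs_nonneg r]) k.le_succ)
  calc ‖(k + 1) * c (k + 1) * r ^ k‖
      = |c (k + 1)| * ((k + 1) * |r| ^ k) := by
        rw [Real.norm_eq_abs, abs_mul, abs_mul, abs_pow,
          abs_of_pos (by positivity : (0 : ℝ) < k + 1)]
        ring
    _ ≤ |c (k + 1)| * (2 ^ (k + 1) * (|r| + 1) ^ (k + 1)) := by gcongr
    _ = ‖c (k + 1) * (2 * (|r| + 1)) ^ (k + 1)‖ := by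
        rw [← mul_pow, Real.norm_eq_abs, abs_mul, abs_of_nonneg (a := _ ^ _) (by positivity)]

lemma hasDerivAt_tsum_mul_pow {c : ℕ → ℝ} (hc : ∀ r, Summable fun k ↦ c k * r ^ k) (x : ℝ) :
    HasDerivAt (fun y ↦ ∑' k, c k * y ^ k) (∑' k : ℕ, (k + 1) * c (k + 1) * x ^ k) x := by
  have hderiv : ∀ r, Summable fun k : ℕ ↦ c k * (k * r ^ (k - 1)) := fun r ↦ by
    rw [← summable_nat_add_iff 1]
    refine (summable_succ_mul_mul_pow hc r).congr fun k ↦ ?_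
    push_cast [Nat.add_sub_cancel]
    ring
  have hx : x ∈ Metric.ball (0 : ℝ) (|x| + 1) := by simp
  have h := hasDerivAt_tsum_of_isPreconnected (hderiv (|x| + 1)).norm Metric.isOpen_ball
    (convex_ball (0 : ℝ) (|x| + 1)).isPreconnected
    (fun k y _ ↦ (hasDerivAt_pow k y).const_mul (c k)) (fun k y hy ↦ ?_) hx (hc x) hx
  · rw [(hderiv x).tsum_eq_zero_add] at h
    simp only [Nat.cast_zero, zero_mul, mul_zero, zero_add, Nat.add_sub_cancel, Nat.cast_succ] at h
    exact h.congr_deriv (tsum_congr fun k ↦ by ring)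
  · rw [mem_ball_zero_iff, Real.norm_eq_abs] at hy
    have hy' : |y| ≤ |(|x| + 1)| := hy.le.trans (le_abs_self _)
    simp only [norm_mul, norm_pow, Real.norm_eq_abs]
    gcongr

end Calculus

section BesselSeries

/-- The coefficient `1 / (4 ^ k k! Γ(k + μ + 1))` of `t ^ k` in `besselSeries μ t`. It vanishes
where `k + μ + 1` is a pole of `Γ`, because `Real.Gamma` is `0` there. -/
noncomputable def besselCoeff (μ : ℝ) (k : ℕ) : ℝ :=
  (4 ^ k * (Nat.factorial k : ℝ) * Real.Gamma (k + μ + 1))⁻¹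

/-- The entire function `φ_μ` with `I_μ(x) = (x / 2) ^ μ φ_μ(x ^ 2)`. Unlike `I_μ` it is regular
at `0`. -/
noncomputable def besselSeries (μ t : ℝ) : ℝ := ∑' k, besselCoeff μ k * t ^ k

lemma succ_mul_besselCoeff_succ (μ : ℝ) (k : ℕ) :
    (k + 1) * besselCoeff μ (k + 1) = besselCoeff (μ + 1) k / 4 := by
  have hk : (k + 1 : ℝ) ≠ 0 := by positivity
  rw [besselCoeff, besselCoeff, Nat.factorial_succ, Nat.cast_mul, Nat.cast_succ,
    show (k : ℝ) + 1 + μ + 1 = k + (μ + 1) + 1 by ring, pow_succ]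
  field_simp

lemma besselCoeff_sub_one (μ : ℝ) (k : ℕ) :
    besselCoeff (μ - 1) k = (μ + k) * besselCoeff μ k := by
  rw [besselCoeff, besselCoeff, show (k : ℝ) + (μ - 1) + 1 = k + μ by ring]
  obtain h0 | h0 := eq_or_ne ((k : ℝ) + μ) 0
  · rw [h0, Real.Gamma_zero, add_comm μ, h0, mul_zero, inv_zero, zero_mul]
  · rw [Real.Gamma_add_one h0, add_comm μ]
    field_simp

lemma besselCoeff_pos {μ : ℝ} (hμ : -1 < μ) (k : ℕ) : 0 < besselCoeff μ k := by
  have := Real.Gamma_pos_of_pos (show 0 < (k : ℝ) + μ + 1 by linarith [k.cast_nonneg (α := ℝ)])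
  rw [besselCoeff]
  positivity

lemma summable_besselCoeff_mul_pow (μ t : ℝ) : Summable fun k ↦ besselCoeff μ k * t ^ k := by
  refine .of_norm_bounded_eventually_nat (Real.summable_pow_div_factorial (|t| / 4)) ?_
  filter_upwards [tendsto_natCast_atTop_atTop.eventually_ge_atTop (1 - μ)] with k hk
  have hΓ : 1 ≤ Real.Gamma (k + μ + 1) := by
    have h2 : 2 ≤ (k : ℝ) + μ + 1 := by linarith
    simpa only [Real.Gamma_two] using
      Real.Gamma_strictMonoOn_Ici.monotoneOn self_mem_Ici (mem_Ici.2 h2) h2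
  calc ‖besselCoeff μ k * t ^ k‖
      = (|t| / 4) ^ k / (Nat.factorial k : ℝ) / Real.Gamma (k + μ + 1) := by
        rw [besselCoeff, norm_mul, norm_inv, norm_pow, Real.norm_eq_abs, Real.norm_eq_abs,
          abs_of_pos (by positivity), div_pow]
        field_simp
    _ ≤ (|t| / 4) ^ k / (Nat.factorial k : ℝ) := div_le_self (by positivity) hΓ

lemma besselSeries_pos {μ t : ℝ} (hμ : -1 < μ) (ht : 0 ≤ t) : 0 < besselSeries μ t :=
  (summable_besselCoeff_mul_pow μ t).tsum_pos
    (fun k ↦ mul_nonneg (besselCoeff_pos hμ k).le (pow_nonneg ht k)) 0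
    (by simpa using besselCoeff_pos hμ 0)

lemma hasDerivAt_besselSeries (μ t : ℝ) :
    HasDerivAt (besselSeries μ) (besselSeries (μ + 1) t / 4) t := by
  have h := hasDerivAt_tsum_mul_pow (summable_besselCoeff_mul_pow μ) t
  simp only [succ_mul_besselCoeff_succ, div_mul_eq_mul_div, tsum_div_const] at h
  exact h

lemma besselSeries_sub_one (μ t : ℝ) :
    besselSeries (μ - 1) t = μ * besselSeries μ t + t / 4 * besselSeries (μ + 1) t := by
  have hterm : ∀ k : ℕ, k * besselCoeff μ k * t ^ k =
      besselCoeff (μ - 1) k * t ^ k - μ * (besselCoeff μ k * t ^ k) := fun k ↦ by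
    rw [besselCoeff_sub_one]; ring
  have hsum : Summable fun k : ℕ ↦ k * besselCoeff μ k * t ^ k := by
    simp only [hterm]
    exact (summable_besselCoeff_mul_pow _ t).sub ((summable_besselCoeff_mul_pow μ t).mul_left μ)
  have hshift : ∑' k : ℕ, k * besselCoeff μ k * t ^ k = t / 4 * besselSeries (μ + 1) t := by
    rw [hsum.tsum_eq_zero_add, besselSeries, ← tsum_mul_left]
    simp only [Nat.cast_zero, zero_mul, zero_add, Nat.cast_succ, succ_mul_besselCoeff_succ]
    exact tsum_congr fun k ↦ by ring
  rw [← hshift, besselSeries, besselSeries, ← tsum_mul_left, ← Summable.tsum_add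
    ((summable_besselCoeff_mul_pow μ t).mul_left μ) hsum]
  exact tsum_congr fun k ↦ by rw [hterm]; ring

lemma besselI_eq_rpow_mul_besselSeries (μ : ℝ) {x : ℝ} (hx : 0 < x) :
    besselI μ x = (x / 2) ^ μ * besselSeries μ (x ^ 2) := by
  rw [besselI, besselSeries, ← tsum_mul_left]
  refine tsum_congr fun k ↦ ?_
  have hpow : (x / 2) ^ (2 * (k : ℝ)) = (x ^ 2) ^ k / 4 ^ k := by
    rw [Real.rpow_mul (by positivity), Real.rpow_natCast, Real.rpow_two, div_pow, div_pow]
    norm_num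
  rw [Real.rpow_add (half_pos hx), hpow, besselCoeff]
  field_simp

end BesselSeries

section BesselQuotient

/-- The ratio `I_{μ+1}(x) / (x I_μ(x))` as a function of `t = x ^ 2`; it is twice the logarithmic
derivative of `besselSeries μ`. -/
noncomputable def besselQuot (μ t : ℝ) : ℝ := besselSeries (μ + 1) t / (2 * besselSeries μ t)

/-- The drop of `besselQuot` from order `μ` to order `μ + 1`, called `d` in the header. -/
noncomputable def besselGap (μ t : ℝ) : ℝ := besselQuot μ t - besselQuot (μ + 1) t

variable {μ t : ℝ}

lemma besselQuot_pos (hμ : -1 < μ) (ht : 0 ≤ t) : 0 < besselQuot μ t :=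
  div_pos (besselSeries_pos (by linarith) ht) (mul_pos two_pos (besselSeries_pos hμ ht))

lemma besselQuot_recurrence (hμ : -1 < μ) (ht : 0 ≤ t) :
    2 * (μ + 1) * besselQuot μ t + t * besselQuot μ t * besselQuot (μ + 1) t = 1 := by
  have h0 := besselSeries_pos hμ ht
  have h1 := besselSeries_pos (show -1 < μ + 1 by linarith) ht
  have h := besselSeries_sub_one (μ + 1) t
  rw [add_sub_cancel_right] at h
  rw [besselQuot, besselQuot]
  field_simp
  linarith

lemma besselQuot_zero (hμ : -1 < μ) : besselQuot μ 0 = 1 / (2 * (μ + 1)) := by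
  have h := besselQuot_recurrence hμ le_rfl
  rw [zero_mul, zero_mul, add_zero, mul_comm] at h
  exact eq_one_div_of_mul_eq_one_left h

lemma hasDerivAt_besselQuot (hμ : -1 < μ) (ht : 0 ≤ t) :
    HasDerivAt (besselQuot μ) (-(besselQuot μ t * besselGap μ t) / 2) t := by
  have h0 := besselSeries_pos hμ ht
  have h1 := besselSeries_pos (show -1 < μ + 1 by linarith) ht
  refine ((hasDerivAt_besselSeries (μ + 1) t).fun_div
    ((hasDerivAt_besselSeries μ t).const_mul 2) (by positivity)).congr_deriv ?_
  rw [besselGap, besselQuot, besselQuot]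
  field_simp
  ring

lemma besselGap_zero (hμ : -1 < μ) : besselGap μ 0 = 1 / (2 * (μ + 1) * (μ + 2)) := by
  have h1 : μ + 1 ≠ 0 := by linarith
  have h2 : μ + 2 ≠ 0 := by linarith
  rw [besselGap, besselQuot_zero hμ, besselQuot_zero (by linarith),
    show μ + 1 + 1 = μ + 2 by ring]
  field_simp
  ring

lemma hasDerivAt_besselGap (hμ : -1 < μ) (ht : 0 ≤ t) :
    HasDerivAt (besselGap μ) ((besselQuot (μ + 1) t * besselGap (μ + 1) t -
      besselQuot μ t * besselGap μ t) / 2) t :=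
  ((hasDerivAt_besselQuot hμ ht).sub (hasDerivAt_besselQuot (by linarith) ht)).congr_deriv
    (by ring)

lemma besselGap_pos (hμ : -1 < μ) (ht : 0 ≤ t) : 0 < besselGap μ t := by
  have hzero : 0 < besselGap μ 0 := by
    have h1 : 0 < μ + 1 := by linarith
    have h2 : 0 < μ + 2 := by linarith
    rw [besselGap_zero hμ]
    positivity
  obtain rfl | ht := ht.eq_or_lt
  · exact hzero
  refine pos_of_deriv_pos_of_eq_zero (fun s hs ↦ hasDerivAt_besselGap hμ hs) hzero.le
    (fun s hs hgap ↦ ?_) ht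
  have hrec := besselQuot_recurrence hμ hs
  have hrec' := besselQuot_recurrence (show -1 < μ + 1 by linarith) hs
  have hb := besselQuot_pos (show -1 < μ + 1 by linarith) hs
  have hnext : s * besselGap (μ + 1) s = 2 := by
    rw [besselGap, sub_eq_zero] at hgap
    rw [hgap] at hrec
    refine mul_left_cancel₀ hb.ne' ?_
    rw [besselGap]
    linear_combination hrec - hrec'
  have hnext_pos : 0 < besselGap (μ + 1) s := pos_of_mul_pos_right (by linarith) hs
  rw [hgap, mul_zero, sub_zero]
  positivity

/-- The function `p` in the logarithmic derivative `d' / d = d / 2 - p` of `d = besselGap μ`. It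
is the quotient `q / t` of the header, written so as to make sense at `t = 0`. -/
noncomputable def gapRate (μ t : ℝ) : ℝ :=
  besselQuot μ t - besselQuot (μ + 1) t / 2 -
    besselQuot (μ + 1) t * besselGap (μ + 1) t / (2 * besselGap μ t)

/-- The function `q` of the header: `t` is a critical point of `touchingConst μ lam` exactly when
`q t = 2 - lam`. -/
noncomputable def criticalShift (μ t : ℝ) : ℝ :=
  μ + 2 + t * besselQuot μ t - besselQuot μ t / besselGap μ t

lemma criticalShift_eq_mul_gapRate (hμ : -1 < μ) (ht : 0 ≤ t) :
    criticalShift μ t = t * gapRate μ t := by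
  have hd := (besselGap_pos hμ ht).ne'
  have hrec := besselQuot_recurrence hμ ht
  have hrec' := besselQuot_recurrence (show -1 < μ + 1 by linarith) ht
  have hb : besselQuot (μ + 1) t = besselQuot μ t - besselGap μ t := by rw [besselGap]; ring
  have hc : besselQuot (μ + 1 + 1) t = besselQuot μ t - besselGap μ t - besselGap (μ + 1) t := by
    rw [← hb, besselGap]; ring
  rw [hc, hb] at hrec'
  rw [hb] at hrec
  rw [criticalShift, gapRate, hb]
  field_simp
  linear_combination hrec - hrec'

lemma criticalShift_zero (hμ : -1 < μ) : criticalShift μ 0 = 0 := by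
  rw [criticalShift_eq_mul_gapRate hμ le_rfl, zero_mul]

lemma gapRate_zero (hμ : -1 < μ) : gapRate μ 0 = 1 / ((μ + 1) * (μ + 3)) := by
  have h1 : μ + 1 ≠ 0 := by linarith
  have h2 : μ + 2 ≠ 0 := by linarith
  have h3 : μ + 3 ≠ 0 := by linarith
  have hμ' : -1 < μ + 1 := by linarith
  rw [gapRate, besselQuot_zero hμ, besselQuot_zero hμ', besselGap_zero hμ, besselGap_zero hμ',
    show μ + 1 + 1 = μ + 2 by ring, show μ + 1 + 2 = μ + 3 by ring]
  field_simp
  ring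

lemma hasDerivAt_besselGap_gapRate (hμ : -1 < μ) (ht : 0 ≤ t) :
    HasDerivAt (besselGap μ) (besselGap μ t * (besselGap μ t / 2 - gapRate μ t)) t := by
  have hd := (besselGap_pos hμ ht).ne'
  refine (hasDerivAt_besselGap hμ ht).congr_deriv ?_
  have hb : besselQuot (μ + 1) t = besselQuot μ t - besselGap μ t := by rw [besselGap]; ring
  rw [gapRate, hb]
  field_simp
  ring

lemma hasDerivAt_mul_besselGap (hμ : -1 < μ) (ht : 0 ≤ t) :
    HasDerivAt (fun s ↦ s * besselGap μ s)
      (besselGap μ t * (1 + t * besselGap μ t / 2 - criticalShift μ t)) t :=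
  ((hasDerivAt_id t).fun_mul (hasDerivAt_besselGap_gapRate hμ ht)).congr_deriv
    (by rw [criticalShift_eq_mul_gapRate hμ ht, id]; ring)

lemma mul_besselGap_lt_one (hμ : -1 / 2 < μ) (ht : 0 ≤ t) : t * besselGap μ t < 1 := by
  have hμ' : -1 < μ := by linarith
  obtain rfl | ht := ht.eq_or_lt
  · simp
  refine sub_pos.1 (pos_of_deriv_pos_of_eq_zero
    (fun s hs ↦ (hasDerivAt_mul_besselGap hμ' hs).const_sub 1) (by simp) (fun s hs hone ↦ ?_) ht)
  have hd := besselGap_pos hμ' hs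
  have hz : s * besselGap μ s = 1 := by linarith
  have hq : criticalShift μ s = μ + 2 := by
    have hquot : besselQuot μ s / besselGap μ s = s * besselQuot μ s := by
      rw [div_eq_iff hd.ne']
      linear_combination -besselQuot μ s * hz
    rw [criticalShift, hquot, add_sub_cancel_right]
  rw [hz, hq]
  nlinarith

lemma hasDerivAt_criticalShift (hμ : -1 < μ) (ht : 0 ≤ t) :
    HasDerivAt (criticalShift μ) (besselQuot μ t / besselGap μ t *
      (2 * besselGap μ t - t * besselGap μ t ^ 2 / 2 - gapRate μ t)) t := by
  have hd := (besselGap_pos hμ ht).ne'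
  have ha := hasDerivAt_besselQuot hμ ht
  refine ((((hasDerivAt_id t).fun_mul ha).const_add (μ + 2)).sub
    (ha.div (hasDerivAt_besselGap_gapRate hμ ht) hd)).congr_deriv ?_
  rw [id]
  field_simp
  ring

lemma criticalShift_lt (hμ : -1 / 2 < μ) (ht : 0 < t) :
    criticalShift μ t < 2 * (t * besselGap μ t) - (t * besselGap μ t) ^ 2 / 2 := by
  have hμ' : -1 < μ := by linarith
  have hderiv : ∀ s, 0 ≤ s → HasDerivAt
      (fun s ↦ 2 * (s * besselGap μ s) - (s * besselGap μ s) ^ 2 / 2 - criticalShift μ s)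
      ((2 - s * besselGap μ s) * (besselGap μ s * (1 + s * besselGap μ s / 2 - criticalShift μ s)) -
        besselQuot μ s / besselGap μ s *
          (2 * besselGap μ s - s * besselGap μ s ^ 2 / 2 - gapRate μ s)) s := fun s hs ↦ by
    have hz := hasDerivAt_mul_besselGap hμ' hs
    refine (((hz.const_mul 2).fun_sub ((hz.fun_pow 2).div_const 2)).fun_sub
      (hasDerivAt_criticalShift hμ' hs)).congr_deriv ?_
    push_cast
    ring
  refine sub_pos.1 (pos_of_deriv_pos_of_eq_zero hderiv (by simp [criticalShift_zero hμ'])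
    (fun s hs hbarrier ↦ ?_) ht)
  have hd := besselGap_pos hμ' hs
  obtain rfl | hs := hs.eq_or_lt
  · have h1 : 0 < μ + 1 := by linarith
    have h2 : 0 < μ + 2 := by linarith
    have h3 : 0 < μ + 3 := by linarith
    have hpos : 0 < 1 / ((μ + 1) * (μ + 2) * (μ + 3)) := by positivity
    refine hpos.trans_eq ?_
    rw [criticalShift_zero hμ', besselQuot_zero hμ', besselGap_zero hμ', gapRate_zero hμ']
    field_simp
    ring
  · have hz := mul_besselGap_lt_one hμ hs.le
    have hq := criticalShift_eq_mul_gapRate hμ' hs.le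
    set z := s * besselGap μ s
    have hqz : criticalShift μ s = 2 * z - z ^ 2 / 2 := by linarith
    have hrate : 2 * besselGap μ s - s * besselGap μ s ^ 2 / 2 - gapRate μ s = 0 := by
      refine mul_left_cancel₀ hs.ne' ?_
      rw [hq] at hqz
      linear_combination -hqz
    have hz2 : 0 < 2 - z := by linarith
    calc 0 < besselGap μ s * ((1 - z) * (2 - z) ^ 2 / 2) := by positivity
      _ = _ := by rw [hrate, hqz]; ring

lemma strictMonoOn_criticalShift (hμ : -1 / 2 < μ) : StrictMonoOn (criticalShift μ) (Ici 0) := by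
  have hμ' : -1 < μ := by linarith
  refine strictMonoOn_of_deriv_pos (convex_Ici 0) (fun t ht ↦
    (hasDerivAt_criticalShift hμ' ht).continuousAt.continuousWithinAt) fun t ht ↦ ?_
  rw [interior_Ici, mem_Ioi] at ht
  have ha := besselQuot_pos hμ' ht.le
  have hd := besselGap_pos hμ' ht.le
  rw [(hasDerivAt_criticalShift hμ' ht.le).deriv]
  refine mul_pos (by positivity) (pos_of_mul_pos_right ?_ ht.le)
  have h := criticalShift_lt hμ ht
  rw [criticalShift_eq_mul_gapRate hμ' ht.le] at h
  linarith

lemma criticalShift_mem_Ioo (hμ : -1 / 2 < μ) (ht : 0 < t) :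
    criticalShift μ t ∈ Ioo 0 (3 / 2) := by
  constructor
  · rw [← criticalShift_zero (show -1 < μ by linarith)]
    exact strictMonoOn_criticalShift hμ self_mem_Ici ht.le ht
  · nlinarith [criticalShift_lt hμ ht, mul_besselGap_lt_one hμ ht.le]

lemma tendsto_mul_besselQuot_atTop (hμ : -1 < μ) :
    Tendsto (fun t ↦ t * besselQuot μ t) atTop atTop := by
  refine tendsto_atTop_mono' atTop ?_
    (tendsto_atTop_add_const_right atTop (-(μ + 1)) Real.tendsto_sqrt_atTop)
  filter_upwards [eventually_ge_atTop 0] with t ht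
  have ha := besselQuot_pos hμ ht
  have hd := besselGap_pos hμ ht
  have hrec := besselQuot_recurrence hμ ht
  have hsq : (t * besselQuot μ t + (μ + 1)) ^ 2 =
      t + t ^ 2 * besselQuot μ t * besselGap μ t + (μ + 1) ^ 2 := by
    rw [besselGap]
    linear_combination t * hrec
  have hle : √t ≤ t * besselQuot μ t + (μ + 1) := by
    refine Real.sqrt_le_iff.2 ⟨by nlinarith, ?_⟩
    rw [hsq]
    nlinarith [show 0 ≤ t ^ 2 * besselQuot μ t * besselGap μ t by positivity]
  linarith

lemma tendsto_besselQuot_atTop (hμ : -1 < μ) : Tendsto (besselQuot μ) atTop (𝓝 0) := by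
  refine (tendsto_inv_atTop_zero.comp (tendsto_atTop_add_const_left atTop (2 * (μ + 1))
    (tendsto_mul_besselQuot_atTop (show -1 < μ + 1 by linarith)))).congr' ?_
  filter_upwards [eventually_ge_atTop 0] with t ht
  refine inv_eq_of_mul_eq_one_left ?_
  linear_combination besselQuot_recurrence hμ ht

lemma tendsto_mul_besselGap_atTop (hμ : -1 / 2 < μ) :
    Tendsto (fun t ↦ t * besselGap μ t) atTop (𝓝 1) := by
  have hμ' : -1 < μ := by linarith
  have hlower : Tendsto (fun t ↦ 1 - (μ + 2) * (t * besselQuot μ t)⁻¹) atTop (𝓝 1) := by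
    simpa using ((tendsto_mul_besselQuot_atTop hμ').inv_tendsto_atTop.const_mul (μ + 2)).const_sub 1
  refine tendsto_of_tendsto_of_tendsto_of_le_of_le' hlower tendsto_const_nhds ?_ ?_ <;>
    filter_upwards [eventually_gt_atTop 0] with t ht
  · have ha := besselQuot_pos hμ' ht.le
    have hd := besselGap_pos hμ' ht.le
    have hz := mul_besselGap_lt_one hμ ht.le
    have hq := (criticalShift_mem_Ioo hμ ht).1
    have hid : t * besselQuot μ t * (1 - t * besselGap μ t) =
        (μ + 2 - criticalShift μ t) * (t * besselGap μ t) := by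
      rw [criticalShift]
      field_simp
      ring
    rw [sub_le_comm, ← div_eq_mul_inv, le_div_iff₀' (by positivity), hid]
    have hzpos : 0 < t * besselGap μ t := by positivity
    nlinarith
  · exact (mul_besselGap_lt_one hμ ht.le).le

lemma exists_lt_criticalShift (hμ : -1 / 2 < μ) {L : ℝ} (hL : L < 3 / 2) :
    ∃ t > 0, L < criticalShift μ t := by
  by_contra! hbound
  have hμ' : -1 < μ := by linarith
  have hz := tendsto_mul_besselGap_atTop hμ
  have hlim : Tendsto (fun t ↦ t * besselGap μ t * (1 + t * besselGap μ t / 2 - L)) atTop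
      (𝓝 (3 / 2 - L)) := by
    convert hz.mul (((hz.div_const 2).const_add 1).sub_const L) using 2
    ring
  have hslope : ∀ᶠ t in atTop, (3 / 2 - L) / 2 ≤
      t * (besselGap μ t * (1 + t * besselGap μ t / 2 - criticalShift μ t)) := by
    filter_upwards [hlim.eventually_const_le (by linarith : (3 / 2 - L) / 2 < 3 / 2 - L),
      eventually_gt_atTop 0] with t h ht
    have hzpos := mul_pos ht (besselGap_pos hμ' ht.le)
    rw [← mul_assoc]
    exact h.trans (by gcongr; exact hbound t ht)
  have hderiv := (eventually_ge_atTop 0).mono fun t ht ↦ hasDerivAt_mul_besselGap hμ' ht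
  linarith [nonpos_of_tendsto_of_le_mul_deriv hz hderiv hslope]

lemma surjOn_criticalShift (hμ : -1 / 2 < μ) :
    SurjOn (criticalShift μ) (Ioi 0) (Ioo 0 (3 / 2)) := by
  intro y hy
  have hμ' : -1 < μ := by linarith
  obtain ⟨s, hs, hys⟩ := exists_lt_criticalShift hμ hy.2
  obtain ⟨t, ht, rfl⟩ := intermediate_value_Ioo (le_of_lt hs)
    (fun t ht ↦ (hasDerivAt_criticalShift hμ' ht.1).continuousAt.continuousWithinAt)
    ⟨(criticalShift_zero hμ').trans_lt hy.1, hys⟩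
  exact ⟨t, ht.1, rfl⟩

end BesselQuotient

section Touching

/-- The constant `C` for which the graph of `upI ν lam C` passes through that of `ratioI ν` at
`x = √t`. -/
noncomputable def touchingConst (ν lam t : ℝ) : ℝ :=
  besselQuot ν t * (t * besselQuot ν t + 2 * (ν + lam))

variable {ν lam C t x : ℝ}

lemma ratioI_eq (hν : -1 < ν) (hx : 0 < x) :
    ratioI ν x = (2 * ν + x ^ 2 * besselQuot ν (x ^ 2)) / x := by
  have hφ := besselSeries_pos hν (sq_nonneg x)
  rw [ratioI, besselI_eq_rpow_mul_besselSeries _ hx, besselI_eq_rpow_mul_besselSeries _ hx,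
    besselSeries_sub_one, Real.rpow_sub_one (by positivity), besselQuot]
  field_simp
  ring

lemma add_mul_besselQuot_sq :
    (ν + lam + t * besselQuot ν t) ^ 2 = (ν + lam) ^ 2 + touchingConst ν lam t * t := by
  rw [touchingConst]; ring

lemma ratioI_le_upI_iff (hν : -1 < ν) (hlam : 0 < ν + lam) (hx : 0 < x) :
    ratioI ν x ≤ upI ν lam C x ↔ touchingConst ν lam (x ^ 2) ≤ C := by
  have ha := besselQuot_pos hν (sq_nonneg x)
  calc ratioI ν x ≤ upI ν lam C x
      ↔ ν + lam + x ^ 2 * besselQuot ν (x ^ 2) ≤ √((ν + lam) ^ 2 + C * x ^ 2) := by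
        rw [ratioI_eq hν hx, upI, div_le_div_iff_of_pos_right hx]
        constructor <;> intro h <;> linarith
    _ ↔ touchingConst ν lam (x ^ 2) * x ^ 2 ≤ C * x ^ 2 := by
        rw [Real.le_sqrt' (by positivity), add_mul_besselQuot_sq, add_le_add_iff_left]
    _ ↔ touchingConst ν lam (x ^ 2) ≤ C := mul_le_mul_iff_left₀ (by positivity)

lemma ratioI_eq_upI_iff (hν : -1 < ν) (hlam : 0 < ν + lam) (hx : 0 < x) :
    ratioI ν x = upI ν lam C x ↔ touchingConst ν lam (x ^ 2) = C := by
  have ha := besselQuot_pos hν (sq_nonneg x)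
  calc ratioI ν x = upI ν lam C x
      ↔ √((ν + lam) ^ 2 + C * x ^ 2) = ν + lam + x ^ 2 * besselQuot ν (x ^ 2) := by
        rw [ratioI_eq hν hx, upI, div_left_inj' hx.ne']
        constructor <;> intro h <;> linarith
    _ ↔ touchingConst ν lam (x ^ 2) * x ^ 2 = C * x ^ 2 := by
        rw [Real.sqrt_eq_iff_mul_self_eq_of_pos (by positivity), ← sq, add_mul_besselQuot_sq,
          add_right_inj]
    _ ↔ touchingConst ν lam (x ^ 2) = C := mul_left_inj' (by positivity)

lemma touchingConst_pos (hν : -1 < ν) (hlam : 0 < ν + lam) (ht : 0 ≤ t) :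
    0 < touchingConst ν lam t := by
  have ha := besselQuot_pos hν ht
  rw [touchingConst]
  positivity

lemma touchesAboveI_iff_isGreatest (hν : -1 < ν) (hlam : 0 < ν + lam) :
    TouchesAboveI ν lam C ↔ IsGreatest (touchingConst ν lam '' Ioi 0) C := by
  constructor
  · rintro ⟨-, hle, x, hx, heq⟩
    refine ⟨⟨x ^ 2, pow_pos hx 2, (ratioI_eq_upI_iff hν hlam hx).1 heq⟩, ?_⟩
    rintro - ⟨t, ht, rfl⟩
    have h := (ratioI_le_upI_iff hν hlam (Real.sqrt_pos.2 ht)).1 (hle √t (Real.sqrt_pos.2 ht))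
    rwa [Real.sq_sqrt (le_of_lt ht)] at h
  · rintro ⟨⟨t, ht, rfl⟩, hmax⟩
    refine ⟨touchingConst_pos hν hlam (le_of_lt ht), fun x hx ↦ ?_, √t, Real.sqrt_pos.2 ht, ?_⟩
    · exact (ratioI_le_upI_iff hν hlam hx).2 (hmax (mem_image_of_mem _ (pow_pos hx 2)))
    · rw [ratioI_eq_upI_iff hν hlam (Real.sqrt_pos.2 ht), Real.sq_sqrt (le_of_lt ht)]

lemma differentiableAt_ratioI (hν : -1 < ν) (hx : 0 < x) : DifferentiableAt ℝ (ratioI ν) x := by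
  have hsq : DifferentiableAt ℝ (fun y : ℝ ↦ y ^ 2) x := by fun_prop
  have ha : DifferentiableAt ℝ (fun y ↦ besselQuot ν (y ^ 2)) x :=
    DifferentiableAt.fun_comp' x (hasDerivAt_besselQuot hν (sq_nonneg x)).differentiableAt hsq
  have hformula := ((hsq.fun_mul ha).const_add (2 * ν)).fun_div differentiableAt_id hx.ne'
  exact hformula.congr_of_eventuallyEq ((eventually_gt_nhds hx).mono fun y hy ↦ ratioI_eq hν hy)

lemma differentiableAt_upI (hC : 0 < C) (hx : 0 < x) : DifferentiableAt ℝ (upI ν lam C) x := by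
  have hpos : (ν + lam) ^ 2 + C * x ^ 2 ≠ 0 := by positivity
  unfold upI
  fun_prop (disch := first | assumption | exact hx.ne')

lemma TouchesAboveI.deriv_eq (h : TouchesAboveI ν lam C) (hν : -1 < ν) (hx : 0 < x)
    (heq : ratioI ν x = upI ν lam C x) : deriv (ratioI ν) x = deriv (upI ν lam C) x :=
  deriv_eq_of_eventually_le_of_eq (differentiableAt_ratioI hν hx) (differentiableAt_upI h.1 hx)
    ((eventually_gt_nhds hx).mono h.2.1) heq

lemma hasDerivAt_touchingConst (hν : -1 < ν) (ht : 0 ≤ t) :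
    HasDerivAt (touchingConst ν lam)
      (besselQuot ν t * besselGap ν t * (2 - lam - criticalShift ν t)) t := by
  have hd := (besselGap_pos hν ht).ne'
  have ha := hasDerivAt_besselQuot hν ht
  refine (ha.fun_mul (((hasDerivAt_id t).fun_mul ha).add_const (2 * (ν + lam)))).congr_deriv ?_
  rw [criticalShift, id]
  field_simp
  ring

lemma touchingConst_lt_of_criticalShift_eq (hν : -1 / 2 < ν) {s : ℝ} (hs : 0 < s)
    (hcrit : criticalShift ν s = 2 - lam) (ht : 0 < t) (hts : t ≠ s) :
    touchingConst ν lam t < touchingConst ν lam s := by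
  have hν' : -1 < ν := by linarith
  have hcont : ContinuousOn (touchingConst ν lam) (Ici 0) := fun u hu ↦
    (hasDerivAt_touchingConst hν' hu).continuousAt.continuousWithinAt
  have hmono := strictMonoOn_criticalShift hν
  have hslope : ∀ u, 0 < u → 0 < besselQuot ν u * besselGap ν u := fun u hu ↦
    mul_pos (besselQuot_pos hν' hu.le) (besselGap_pos hν' hu.le)
  obtain hlt | hgt := hts.lt_or_gt
  · refine strictMonoOn_of_deriv_pos (convex_Icc 0 s) (hcont.mono Icc_subset_Ici_self)
      (fun u hu ↦ ?_) ⟨ht.le, hlt.le⟩ (right_mem_Icc.2 hs.le) hlt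
    rw [interior_Icc] at hu
    rw [(hasDerivAt_touchingConst hν' hu.1.le).deriv, ← hcrit]
    exact mul_pos (hslope u hu.1) (sub_pos.2 (hmono hu.1.le hs.le hu.2))
  · refine strictAntiOn_of_deriv_neg (convex_Ici s) (hcont.mono (Ici_subset_Ici.2 hs.le))
      (fun u hu ↦ ?_) self_mem_Ici hgt.le hgt
    rw [interior_Ici, mem_Ioi] at hu
    have hu0 := hs.trans hu
    rw [(hasDerivAt_touchingConst hν' hu0.le).deriv, ← hcrit]
    exact mul_neg_of_pos_of_neg (hslope u hu0) (sub_neg.2 (hmono hs.le hu0.le hu))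

end Touching

section BestConstant

/-- The square of the abscissa `x*(lam)` at which `ratioI ν` and its best bound touch. -/
noncomputable def touchingSq (ν lam : ℝ) : ℝ :=
  Function.invFunOn (criticalShift ν) (Ioi 0) (2 - lam)

/-- The best constant `C(lam)`. -/
noncomputable def bestConst (ν lam : ℝ) : ℝ := touchingConst ν lam (touchingSq ν lam)

variable {ν lam : ℝ}

lemma exists_criticalShift_eq (hν : -1 / 2 < ν) (hlam : lam ∈ Ioo (1 / 2 : ℝ) 2) :
    ∃ t ∈ Ioi 0, criticalShift ν t = 2 - lam :=
  surjOn_criticalShift hν ⟨by linarith [hlam.2], by linarith [hlam.1]⟩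

lemma touchingSq_pos (hν : -1 / 2 < ν) (hlam : lam ∈ Ioo (1 / 2 : ℝ) 2) : 0 < touchingSq ν lam :=
  Function.invFunOn_mem (exists_criticalShift_eq hν hlam)

lemma criticalShift_touchingSq (hν : -1 / 2 < ν) (hlam : lam ∈ Ioo (1 / 2 : ℝ) 2) :
    criticalShift ν (touchingSq ν lam) = 2 - lam :=
  Function.invFunOn_eq (exists_criticalShift_eq hν hlam)

lemma touchingConst_lt_bestConst (hν : -1 / 2 < ν) (hlam : lam ∈ Ioo (1 / 2 : ℝ) 2) {t : ℝ}
    (ht : 0 < t) (hne : t ≠ touchingSq ν lam) : touchingConst ν lam t < bestConst ν lam :=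
  touchingConst_lt_of_criticalShift_eq hν (touchingSq_pos hν hlam)
    (criticalShift_touchingSq hν hlam) ht hne

lemma isGreatest_bestConst (hν : -1 / 2 < ν) (hlam : lam ∈ Ioo (1 / 2 : ℝ) 2) :
    IsGreatest (touchingConst ν lam '' Ioi 0) (bestConst ν lam) := by
  refine ⟨mem_image_of_mem _ (touchingSq_pos hν hlam), ?_⟩
  rintro - ⟨t, ht, rfl⟩
  obtain rfl | hne := eq_or_ne t (touchingSq ν lam)
  · exact le_rfl
  · exact (touchingConst_lt_bestConst hν hlam ht hne).le

lemma touchesAboveI_iff_eq_bestConst (hν : -1 / 2 < ν) (hlam : lam ∈ Ioo (1 / 2 : ℝ) 2) {C : ℝ} :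
    TouchesAboveI ν lam C ↔ C = bestConst ν lam := by
  rw [touchesAboveI_iff_isGreatest (by linarith) (by linarith [hlam.1])]
  exact ⟨fun h ↦ h.unique (isGreatest_bestConst hν hlam), fun h ↦ h ▸ isGreatest_bestConst hν hlam⟩

lemma tangentAboveI_bestConst (hν : -1 / 2 < ν) (hlam : lam ∈ Ioo (1 / 2 : ℝ) 2) :
    TangentAboveI ν lam (bestConst ν lam) √(touchingSq ν lam) := by
  have hT := touchingSq_pos hν hlam
  have heq_iff : ∀ x > 0, ratioI ν x = upI ν lam (bestConst ν lam) x ↔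
      touchingConst ν lam (x ^ 2) = bestConst ν lam := fun x hx ↦
    ratioI_eq_upI_iff (by linarith) (by linarith [hlam.1]) hx
  have heq : ratioI ν √(touchingSq ν lam) = upI ν lam (bestConst ν lam) √(touchingSq ν lam) := by
    rw [heq_iff _ (Real.sqrt_pos.2 hT), Real.sq_sqrt hT.le, bestConst]
  have htouch := (touchesAboveI_iff_eq_bestConst hν hlam).2 rfl
  refine ⟨Real.sqrt_pos.2 hT, heq, fun x hx h ↦ ?_,
    htouch.deriv_eq (by linarith) (Real.sqrt_pos.2 hT) heq⟩
  refine ((Real.sqrt_eq_iff_eq_sq hT.le hx.le).2 (of_not_not fun hne ↦ ?_)).symm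
  exact (touchingConst_lt_bestConst hν hlam (pow_pos hx 2) (Ne.symm hne)).ne ((heq_iff x hx).1 h)

lemma strictMonoOn_bestConst (hν : -1 / 2 < ν) :
    StrictMonoOn (bestConst ν) (Ioo (1 / 2) 2) := by
  intro lam hlam lam' hlam' hlt
  have hT := touchingSq_pos hν hlam
  have ha := besselQuot_pos (show -1 < ν by linarith) hT.le
  calc bestConst ν lam
      < touchingConst ν lam' (touchingSq ν lam) := by
        rw [bestConst, touchingConst, touchingConst]
        gcongr
    _ ≤ bestConst ν lam' := (isGreatest_bestConst hν hlam').2 (mem_image_of_mem _ hT)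

lemma touchingSq_lt_iff (hν : -1 / 2 < ν) (hlam : lam ∈ Ioo (1 / 2 : ℝ) 2) {t : ℝ} (ht : 0 < t) :
    touchingSq ν lam < t ↔ 2 - lam < criticalShift ν t := by
  rw [← criticalShift_touchingSq hν hlam]
  exact ((strictMonoOn_criticalShift hν).lt_iff_lt (touchingSq_pos hν hlam).le ht.le).symm

lemma lt_touchingSq_iff (hν : -1 / 2 < ν) (hlam : lam ∈ Ioo (1 / 2 : ℝ) 2) {t : ℝ} (ht : 0 < t) :
    t < touchingSq ν lam ↔ criticalShift ν t < 2 - lam := by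
  rw [← criticalShift_touchingSq hν hlam]
  exact ((strictMonoOn_criticalShift hν).lt_iff_lt ht.le (touchingSq_pos hν hlam).le).symm

lemma strictAntiOn_touchingSq (hν : -1 / 2 < ν) :
    StrictAntiOn (touchingSq ν) (Ioo (1 / 2) 2) := by
  intro lam hlam lam' hlam' hlt
  rw [touchingSq_lt_iff hν hlam' (touchingSq_pos hν hlam), criticalShift_touchingSq hν hlam]
  linarith

lemma tendsto_touchingSq_nhdsGT_half (hν : -1 / 2 < ν) :
    Tendsto (touchingSq ν) (𝓝[>] (1 / 2)) atTop := by
  refine tendsto_atTop.2 fun b ↦ ?_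
  have hb : 0 < max b 1 := by positivity
  have hq := (criticalShift_mem_Ioo hν hb).2
  filter_upwards [Ioo_mem_nhdsGT (by norm_num : (1 / 2 : ℝ) < 2),
    Ioo_mem_nhdsGT (by linarith : 1 / 2 < 2 - criticalShift ν (max b 1))] with lam hlam hlt
  exact (le_max_left b 1).trans ((lt_touchingSq_iff hν hlam hb).2 (by linarith [hlt.2])).le

lemma tendsto_touchingSq_nhdsLT_two (hν : -1 / 2 < ν) : Tendsto (touchingSq ν) (𝓝[<] 2) (𝓝 0) := by
  have hmem : ∀ᶠ lam in 𝓝[<] (2 : ℝ), lam ∈ Ioo (1 / 2 : ℝ) 2 := Ioo_mem_nhdsLT (by norm_num)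
  refine tendsto_order.2 ⟨fun ε hε ↦ ?_, fun ε hε ↦ ?_⟩
  · filter_upwards [hmem] with lam hlam
    exact hε.trans (touchingSq_pos hν hlam)
  · have hq := (criticalShift_mem_Ioo hν hε).1
    filter_upwards [hmem, Ioo_mem_nhdsLT (by linarith : 2 - criticalShift ν ε < 2)]
      with lam hlam hlt
    exact (touchingSq_lt_iff hν hlam hε).2 (by linarith [hlt.1])

lemma touchingConst_eq_one_add (hν : -1 < ν) {t : ℝ} (ht : 0 ≤ t) :
    touchingConst ν lam t = 1 + besselQuot ν t * (t * besselGap ν t + 2 * (lam - 1)) := by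
  rw [touchingConst, besselGap]
  linear_combination besselQuot_recurrence hν ht

lemma tendsto_bestConst_nhdsGT_half (hν : -1 / 2 < ν) :
    Tendsto (bestConst ν) (𝓝[>] (1 / 2)) (𝓝 1) := by
  have hν' : -1 < ν := by linarith
  have hT := tendsto_touchingSq_nhdsGT_half hν
  have hlam : Tendsto (fun lam : ℝ ↦ 2 * (lam - 1)) (𝓝[>] (1 / 2)) (𝓝 (2 * (1 / 2 - 1))) :=
    (Continuous.tendsto (by fun_prop) _).mono_left nhdsWithin_le_nhds
  have hlim := (((tendsto_besselQuot_atTop hν').comp hT).mul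
    (((tendsto_mul_besselGap_atTop hν).comp hT).add hlam)).const_add 1
  rw [zero_mul, add_zero] at hlim
  refine hlim.congr' ?_
  filter_upwards [hT.eventually_ge_atTop 0] with lam ht
  exact (touchingConst_eq_one_add hν' ht).symm

lemma tendsto_bestConst_nhdsLT_two (hν : -1 / 2 < ν) :
    Tendsto (bestConst ν) (𝓝[<] 2) (𝓝 ((ν + 2) / (ν + 1))) := by
  have hν' : -1 < ν := by linarith
  have hT := tendsto_touchingSq_nhdsLT_two hν
  have ha := (hasDerivAt_besselQuot hν' le_rfl).continuousAt.tendsto.comp hT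
  have hlam : Tendsto (fun lam : ℝ ↦ 2 * (ν + lam)) (𝓝[<] 2) (𝓝 (2 * (ν + 2))) :=
    (Continuous.tendsto (by fun_prop) _).mono_left nhdsWithin_le_nhds
  have hvalue : besselQuot ν 0 * (0 * besselQuot ν 0 + 2 * (ν + 2)) = (ν + 2) / (ν + 1) := by
    have hne : ν + 1 ≠ 0 := by linarith
    rw [besselQuot_zero hν']
    field_simp
    ring
  exact hvalue ▸ ha.mul ((hT.mul ha).add hlam)

end BestConstant

theorem best_upper_bound_I_general (ν : ℝ) (hν : -1 / 2 < ν) :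
    (∀ lam ∈ Ioo (1 / 2 : ℝ) 2,
      (∃! C : ℝ, TouchesAboveI ν lam C) ∧
      (∀ C : ℝ, TouchesAboveI ν lam C → ∃ xs : ℝ, TangentAboveI ν lam C xs)) ∧
    (∃ C X : ℝ → ℝ,
      (∀ lam ∈ Ioo (1 / 2 : ℝ) 2,
        TouchesAboveI ν lam (C lam) ∧ TangentAboveI ν lam (C lam) (X lam)) ∧
      StrictMonoOn C (Ioo (1 / 2 : ℝ) 2) ∧
      StrictAntiOn X (Ioo (1 / 2 : ℝ) 2) ∧
      Tendsto C (nhdsWithin (1 / 2) (Ioi (1 / 2))) (nhds 1) ∧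
      Tendsto C (nhdsWithin 2 (Iio 2)) (nhds ((ν + 2) / (ν + 1))) ∧
      Tendsto X (nhdsWithin (1 / 2) (Ioi (1 / 2))) atTop ∧
      Tendsto X (nhdsWithin 2 (Iio 2)) (nhds 0)) := by
  have htouch : ∀ lam ∈ Ioo (1 / 2 : ℝ) 2, ∀ C, TouchesAboveI ν lam C ↔ C = bestConst ν lam :=
    fun lam hlam C ↦ touchesAboveI_iff_eq_bestConst hν hlam
  refine ⟨fun lam hlam ↦ ⟨?_, ?_⟩, bestConst ν, fun lam ↦ √(touchingSq ν lam),
    fun lam hlam ↦ ⟨(htouch lam hlam _).2 rfl, tangentAboveI_bestConst hν hlam⟩,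
    strictMonoOn_bestConst hν, fun lam hlam lam' hlam' hlt ↦ ?_, tendsto_bestConst_nhdsGT_half hν,
    tendsto_bestConst_nhdsLT_two hν,
    Real.tendsto_sqrt_atTop.comp (tendsto_touchingSq_nhdsGT_half hν), ?_⟩
  · simp only [htouch lam hlam, existsUnique_eq]
  · intro C hC
    rw [(htouch lam hlam C).1 hC]
    exact ⟨_, tangentAboveI_bestConst hν hlam⟩
  · exact Real.sqrt_lt_sqrt (touchingSq_pos hν hlam').le (strictAntiOn_touchingSq hν hlam hlam' hlt)
  · simpa using (tendsto_touchingSq_nhdsLT_two hν).sqrt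

theorem best_upper_bound_I (ν : ℝ) (hν : 0 ≤ ν) :
    (∀ lam ∈ Ioo (1 / 2 : ℝ) 2,
      (∃! C : ℝ, TouchesAboveI ν lam C) ∧
      (∀ C : ℝ, TouchesAboveI ν lam C → ∃ xs : ℝ, TangentAboveI ν lam C xs)) ∧
    (∃ C X : ℝ → ℝ,
      (∀ lam ∈ Ioo (1 / 2 : ℝ) 2,
        TouchesAboveI ν lam (C lam) ∧ TangentAboveI ν lam (C lam) (X lam)) ∧
      StrictMonoOn C (Ioo (1 / 2 : ℝ) 2) ∧
      StrictAntiOn X (Ioo (1 / 2 : ℝ) 2) ∧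
      Tendsto C (nhdsWithin (1 / 2) (Ioi (1 / 2))) (nhds 1) ∧
      Tendsto C (nhdsWithin 2 (Iio 2)) (nhds ((ν + 2) / (ν + 1))) ∧
      Tendsto X (nhdsWithin (1 / 2) (Ioi (1 / 2))) atTop ∧
      Tendsto X (nhdsWithin 2 (Iio 2)) (nhds 0)) :=
  best_upper_bound_I_general ν (by linarith)
end
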